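/- arXiv:1510.01605 — 2 statements merged into one kernel-verified Lean document; each statement's English description precedes it below -/
import Mathlib

section
/- Let k ≥ 1, let V be a Banach space and K ⊆ V a compact convex subset. Consider the shift action of ℤ^k on K^{ℤ^k}, with the compatible metric D(x,y) = Σ_{n∈ℤ^k} 2^{−|n|} ‖x_n − y_n‖_V. Let (X,T) be a ℤ^k-system with the marker property. Then for a dense G_δ subset of f in C(X,K) (uniform topology), the closed shift-invariant set I_f(X) ⊆ K^{ℤ^k} satisfies mmdim(I_f(X), D) ≤ mdim(X). -/
/-!
Only the case `mdim X T < ∞` and `X` nonempty needs an argument. The set of good functions is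
`⋂ j, U j`, where `U j` is the union of the balls `B(g, ε)` over those `g` and `ε < 1 / (j + 1)` for
which `I_g` takes, along some box `[N]` and up to an error `ε`, at most `M` values with
`log M ≤ (mdim X + 1 / (j + 1)) N^k |log (Q ε)|` (`FewColors`). For `f` in such a ball `I_f(X)` has
an open cover with `M` members of diameter `< Q ε` (`entScaleOn_le`), so every `f` in the
intersection satisfies `mmdim ≤ mdim`. By the Baire category theorem it remains to see that each
`U j` is dense, i.e. that every `f` can be perturbed to some `g` with few colours
(`exists_fewColors`).

The perturbation combines two ingredients.

* Choose `N₀` with `widim_δ(X, d_{[N₀]}) / N₀^k < m`, where `δ` is a modulus of continuity of `f`.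
  Pulling back a Lipschitz partition of unity along a `δ`-embedding of `X` into a complex of
  dimension `D = widim` gives a partition of unity `ψ`, subordinate to `d_{[N₀]}`-balls, which takes
  only `O(n^D)` values at resolution `1 / n` (`exists_partition`).

* A continuous Rokhlin lemma (`rokhlin`): there is a partition of unity `w`, indexed by `[N₀]`, such
  that along every orbit all but a fraction `γ` of the sites lie in a translate `b + [N₀]` whose site
  `b + a` has label `a` with weight one. It comes from the power diagram of the marker times: each
  site is assigned to the time `n` minimising `|s - n|² + τ(T^n x)`, where the height `τ` is
  continuous, and is labelled by its residue modulo `N₀` relative to `n`. To see that few sites are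
  close to a cell boundary, put `i ∈ ℤ^k` in the cell of `n` for the power diagram at `i / (q - 1)`
  with heights multiplied by `q / (q - 1)`. The points `(i + n) / q` are then distinct for distinct
  `i`, and each is deep inside the cell of `n` in the original diagram because marker times are far
  apart (`cell_estimate`). Counting the points `i` in a box shows that the deep sites have density
  at least about `((q - 1) / q)^k` (`deep_sites`).

Then `g(x) = ∑ a, w_a(x) ∑ j, ψ_j(T^{-a} x) f(T^a j)` has values in `K` and is close to `f`. On a
block with base point `b` its values depend only on the numbers `ψ_j(T^b x)`, so a block costs
`D log n` for `N₀^k` sites; the remaining sites cost a constant times `log n` each but have density at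
most `γ`. Summing up gives `log M ≲ (D / N₀^k + O(γ)) N^k log n` at scale `1 / n`.
-/

open Set Filter
open scoped NNReal ENNReal Topology

/-- A continuous action of `ℤ^k` on a topological space. -/
structure IsZkAction {k : ℕ} {X : Type*} [TopologicalSpace X]
    (T : (Fin k → ℤ) → X → X) : Prop where
  cont : ∀ n, Continuous (T n)
  map_zero : ∀ x, T 0 x = x
  map_add : ∀ m n x, T (m + n) x = T m (T n x)

/-- The marker property for a `ℤ^k`-action. -/
def MarkerProperty {k : ℕ} {X : Type*} [TopologicalSpace X]
    (T : (Fin k → ℤ) → X → X) : Prop :=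
  ∀ F : Finset (Fin k → ℤ), ∃ U : Set X, IsOpen U ∧
    (⋃ n : Fin k → ℤ, T n '' U) = Set.univ ∧
    ∀ n ∈ F, n ≠ 0 → U ∩ T n '' U = ∅

/-- `f` is an `ε`-embedding with respect to the (pseudo-)distance `ρ`:
every fiber of `f` has `ρ`-diameter `< ε`. -/
def IsEpsEmbedding {X Y : Type*} [TopologicalSpace X] [TopologicalSpace Y]
    (ρ : X → X → ℝ) (ε : ℝ) (f : X → Y) : Prop :=
  Continuous f ∧ ∀ x y, f x = f y → ρ x y < ε

/-- `widim_ε(X, ρ)`: the least `n` such that there is an `ε`-embedding of `X`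
into a finite simplicial complex of dimension at most `n`. -/
noncomputable def widim (X : Type*) [TopologicalSpace X] (ρ : X → X → ℝ) (ε : ℝ) : ℕ :=
  sInf {n : ℕ | ∃ (m : ℕ) (P : Geometry.SimplicialComplex ℝ (EuclideanSpace ℝ (Fin m))),
    P.faces.Finite ∧ (∀ s ∈ P.faces, s.card ≤ n + 1) ∧
    ∃ f : X → P.space, IsEpsEmbedding ρ ε f}

/-- The distance `ρ_{[N]}(x,y) = sup_{a ∈ {0,…,N-1}^k} ρ(T^a x, T^a y)`. -/
noncomputable def blockRho {k : ℕ} {X : Type*} (T : (Fin k → ℤ) → X → X)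
    (ρ : X → X → ℝ) (N : ℕ) (x y : X) : ℝ :=
  ⨆ a : Fin k → Fin N, ρ (T (fun i => (a i : ℤ)) x) (T (fun i => (a i : ℤ)) y)

/-- Mean dimension of a `ℤ^k`-system:
`mdim(X) = lim_{ε→0} lim_{N→∞} widim_ε(X, d_{[N]})/N^k`, where the limit in `N`
equals the infimum (subadditivity) and the limit in `ε` equals the supremum
(monotonicity). -/
noncomputable def mdim {k : ℕ} (X : Type*) [MetricSpace X]
    (T : (Fin k → ℤ) → X → X) : ℝ≥0∞ :=
  ⨆ (ε : ℝ) (_ : 0 < ε), ⨅ (N : ℕ) (_ : 1 ≤ N),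
    (widim X (blockRho T dist N) ε : ℝ≥0∞) / (N : ℝ≥0∞) ^ k

/-- Minimal cardinality of a cover of `Y ⊆ Ω` by open subsets of `Ω` whose
traces on `Y` have `ρ`-diameter `< ε`. -/
noncomputable def coverNumOn {Ω : Type*} [TopologicalSpace Ω] (Y : Set Ω)
    (ρ : Ω → Ω → ℝ) (ε : ℝ) : ℕ :=
  sInf {n : ℕ | ∃ U : Fin n → Set Ω, (∀ i, IsOpen (U i)) ∧ Y ⊆ (⋃ i, U i) ∧
    ∀ i, ∀ x ∈ U i ∩ Y, ∀ y ∈ U i ∩ Y, ρ x y < ε}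

/-- `S(Y, ε, ρ)` for an invariant subset `Y` of an ambient system `(Ω, σ)`. -/
noncomputable def entScaleOn {k : ℕ} {Ω : Type*} [TopologicalSpace Ω]
    (σ : (Fin k → ℤ) → Ω → Ω) (Y : Set Ω) (ρ : Ω → Ω → ℝ) (ε : ℝ) : ℝ≥0∞ :=
  ⨅ (N : ℕ) (_ : 1 ≤ N),
    ENNReal.ofReal (Real.log ((coverNumOn Y (blockRho σ ρ N) ε : ℝ))) / (N : ℝ≥0∞) ^ k

/-- Metric mean dimension `mmdim(Y,ρ) = liminf_{ε→0⁺} S(Y,ε,ρ)/|log ε|`. -/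
noncomputable def mmdimOn {k : ℕ} {Ω : Type*} [TopologicalSpace Ω]
    (σ : (Fin k → ℤ) → Ω → Ω) (Y : Set Ω) (ρ : Ω → Ω → ℝ) : ℝ≥0∞ :=
  Filter.liminf (fun ε : ℝ => entScaleOn σ Y ρ ε / ENNReal.ofReal |Real.log ε|)
    (nhdsWithin 0 (Set.Ioi 0))

/-- The Euclidean norm of a lattice point `n ∈ ℤ^k`. -/
noncomputable def znorm {k : ℕ} (n : Fin k → ℤ) : ℝ :=
  Real.sqrt (∑ i, ((n i : ℝ)) ^ 2)

/-- The metric `D(x,y) = Σ_{n∈ℤ^k} 2^{-|n|} ‖x_n - y_n‖` on `K^{ℤ^k}` (here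
defined on all of `V^{ℤ^k}`). -/
noncomputable def shiftMetric {k : ℕ} {V : Type*} [NormedAddCommGroup V]
    (x y : (Fin k → ℤ) → V) : ℝ :=
  ∑' n : Fin k → ℤ, (2 : ℝ) ^ (-(znorm n)) * ‖x n - y n‖

/-! ### The weighted metric on the full shift -/

lemma abs_le_znorm {k : ℕ} (n : Fin k → ℤ) (i : Fin k) : |(n i : ℝ)| ≤ znorm n := by
  unfold znorm
  apply Real.abs_le_sqrt
  exact Finset.single_le_sum (f := fun i => ((n i : ℝ)) ^ 2) (fun _ _ => sq_nonneg _)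
    (Finset.mem_univ i)

lemma summable_prod_pow (k : ℕ) (r : ℝ) (hr : 0 ≤ r)
    (hsum : Summable fun j : ℤ => r ^ j.natAbs) :
    Summable fun n : Fin k → ℤ => ∏ i, r ^ (n i).natAbs := by
  have hnn : ∀ n : Fin k → ℤ, 0 ≤ ∏ i, r ^ (n i).natAbs :=
    fun n => Finset.prod_nonneg fun i _ => pow_nonneg hr _
  refine summable_of_sum_le (c := ∏ _i : Fin k, ∑' j : ℤ, r ^ j.natAbs) hnn ?_
  intro s
  have hsub : s ⊆ Fintype.piFinset (fun i => s.image (fun n => n i)) := by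
    intro n hn
    rw [Fintype.mem_piFinset]
    intro i
    exact Finset.mem_image_of_mem (fun n : Fin k → ℤ => n i) hn
  have h1 : ∑ n ∈ s, ∏ i, r ^ (n i).natAbs
      ≤ ∑ n ∈ Fintype.piFinset (fun i => s.image (fun n => n i)), ∏ i, r ^ (n i).natAbs :=
    Finset.sum_le_sum_of_subset_of_nonneg hsub fun n _ _ => hnn n
  have h2 := Finset.prod_univ_sum (fun i => s.image (fun n : Fin k → ℤ => n i))
    (fun (_ : Fin k) (j : ℤ) => r ^ j.natAbs)
  rw [← h2] at h1
  refine h1.trans (Finset.prod_le_prod (fun i _ => Finset.sum_nonneg fun j _ => pow_nonneg hr _) ?_)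
  intro i _
  exact hsum.sum_le_tsum _ (fun j _ => pow_nonneg hr _)

lemma summable_weight (k : ℕ) (hk : 1 ≤ k) :
    Summable fun n : Fin k → ℤ => (2 : ℝ) ^ (-(znorm n)) := by
  have hk0 : (0 : ℝ) < k := by exact_mod_cast hk
  obtain ⟨r, hr⟩ : ∃ r : ℝ, r = (2 : ℝ) ^ (-(1 / (k : ℝ))) := ⟨_, rfl⟩
  have hr0 : 0 < r := by rw [hr]; positivity
  have hr1 : r < 1 := hr ▸ Real.rpow_lt_one_of_one_lt_of_neg (by norm_num)
    (by have : 0 < 1 / (k : ℝ) := by positivity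
        linarith)
  have hsum : Summable fun j : ℤ => r ^ j.natAbs := by
    apply Summable.of_nat_of_neg
    · simpa using summable_geometric_of_lt_one hr0.le hr1
    · simpa using summable_geometric_of_lt_one hr0.le hr1
  have hle : ∀ n : Fin k → ℤ, (2 : ℝ) ^ (-(znorm n)) ≤ ∏ i, r ^ (n i).natAbs := by
    intro n
    have h1 : ∑ i, |(n i : ℝ)| ≤ k * znorm n := by
      calc ∑ i, |(n i : ℝ)| ≤ ∑ _i : Fin k, znorm n :=
            Finset.sum_le_sum fun i _ => abs_le_znorm n i
        _ = k * znorm n := by simp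
    have h2 : ∏ i, r ^ (n i).natAbs = (2 : ℝ) ^ (-(1 / (k : ℝ)) * ∑ i, |(n i : ℝ)|) := by
      rw [Finset.prod_pow_eq_pow_sum, hr, ← Real.rpow_natCast, ← Real.rpow_mul (by norm_num)]
      congr 2
      push_cast
      exact Finset.sum_congr rfl fun i _ => by rw [Nat.cast_natAbs, Int.cast_abs]
    rw [h2]
    apply Real.rpow_le_rpow_of_exponent_le (by norm_num)
    have : 1 / (k : ℝ) * ∑ i, |(n i : ℝ)| ≤ 1 / (k : ℝ) * (k * znorm n) :=
      mul_le_mul_of_nonneg_left h1 (by positivity)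
    have h3 : 1 / (k : ℝ) * (k * znorm n) = znorm n := by field_simp
    linarith
  exact Summable.of_nonneg_of_le (fun n => by positivity) hle (summable_prod_pow k r hr0.le hsum)

section
variable {k : ℕ} {V : Type*} [NormedAddCommGroup V]

lemma summable_shift (hk : 1 ≤ k) {x y : (Fin k → ℤ) → V} {B : ℝ}
    (hB : ∀ n, ‖x n - y n‖ ≤ B) :
    Summable fun n : Fin k → ℤ => (2 : ℝ) ^ (-(znorm n)) * ‖x n - y n‖ :=
  Summable.of_nonneg_of_le (fun n => by positivity)
    (fun n => mul_le_mul_of_nonneg_left (hB n) (by positivity))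
    ((summable_weight k hk).mul_right B)

lemma shiftMetric_triangle (hk : 1 ≤ k) {x y z : (Fin k → ℤ) → V} {B : ℝ}
    (h1 : ∀ n, ‖x n - y n‖ ≤ B) (h2 : ∀ n, ‖y n - z n‖ ≤ B) (h3 : ∀ n, ‖x n - z n‖ ≤ B) :
    shiftMetric x z ≤ shiftMetric x y + shiftMetric y z := by
  unfold shiftMetric
  rw [← (summable_shift hk h1).tsum_add (summable_shift hk h2)]
  refine (summable_shift hk h3).tsum_le_tsum (fun n => ?_)
    ((summable_shift hk h1).add (summable_shift hk h2))
  rw [← mul_add]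
  exact mul_le_mul_of_nonneg_left (norm_sub_le_norm_sub_add_norm_sub _ _ _) (by positivity)

lemma shiftMetric_comm (x y : (Fin k → ℤ) → V) : shiftMetric x y = shiftMetric y x := by
  unfold shiftMetric
  exact tsum_congr fun n => by rw [norm_sub_rev]

/-- Outside a large box the weights contribute little, so closeness of `x` and `y` on the box
controls their distance. -/
lemma exists_window (hk : 1 ≤ k) (B : ℝ) (hB : 0 ≤ B) (ε : ℝ) (hε : 0 < ε) :
    ∃ L : ℕ, ∀ (x y : (Fin k → ℤ) → V) (c : ℝ), 0 ≤ c → (∀ n, ‖x n - y n‖ ≤ B) →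
      (∀ n, (∀ i, |n i| ≤ (L : ℤ)) → ‖x n - y n‖ ≤ c) →
      shiftMetric x y ≤ (∑' n : Fin k → ℤ, (2 : ℝ) ^ (-(znorm n))) * c + ε := by
  have hs := summable_weight k hk
  obtain ⟨s, hs'⟩ := (tendsto_order.1 (tendsto_tsum_compl_atTop_zero
    (fun n : Fin k → ℤ => (2 : ℝ) ^ (-(znorm n))))).2 (ε / (B + 1)) (by positivity)
    |>.exists
  obtain ⟨L, hL⟩ : ∃ L : ℕ, ∀ n ∈ s, ∀ i, |n i| ≤ (L : ℤ) := by
    refine ⟨∑ n ∈ s, ∑ i, (n i).natAbs, fun n hn i => ?_⟩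
    rw [Int.abs_eq_natAbs]
    have h1 : (n i).natAbs ≤ ∑ i, (n i).natAbs :=
      Finset.single_le_sum (f := fun i => (n i).natAbs) (fun _ _ => Nat.zero_le _)
        (Finset.mem_univ i)
    have h2 := Finset.single_le_sum (f := fun n : Fin k → ℤ => ∑ i, (n i).natAbs)
      (fun _ _ => Nat.zero_le _) hn
    exact_mod_cast h1.trans h2
  refine ⟨L, fun x y c hc hxy hin => ?_⟩
  have hsm := summable_shift hk hxy
  unfold shiftMetric
  rw [← hsm.sum_add_tsum_compl (s := s)]
  refine add_le_add ?_ ?_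
  · calc ∑ n ∈ s, (2 : ℝ) ^ (-(znorm n)) * ‖x n - y n‖
        ≤ ∑ n ∈ s, (2 : ℝ) ^ (-(znorm n)) * c :=
          Finset.sum_le_sum fun n hn =>
            mul_le_mul_of_nonneg_left (hin n (hL n hn)) (by positivity)
      _ = (∑ n ∈ s, (2 : ℝ) ^ (-(znorm n))) * c := by rw [Finset.sum_mul]
      _ ≤ _ := mul_le_mul_of_nonneg_right (hs.sum_le_tsum _ fun _ _ => by positivity) hc
  · have h1 : ∑' n : ↥((s : Set (Fin k → ℤ))ᶜ), (2 : ℝ) ^ (-(znorm n.1)) * ‖x n.1 - y n.1‖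
        ≤ ∑' n : ↥((s : Set (Fin k → ℤ))ᶜ), (2 : ℝ) ^ (-(znorm n.1)) * B := by
      refine (hsm.subtype _).tsum_le_tsum (fun n => ?_) ((hs.subtype _).mul_right B)
      exact mul_le_mul_of_nonneg_left (hxy _) (by positivity)
    rw [tsum_mul_right] at h1
    have h2 : ∑' n : ↥((s : Set (Fin k → ℤ))ᶜ), (2 : ℝ) ^ (-(znorm n.1)) < ε / (B + 1) := hs'
    have h3 : ε / (B + 1) * B ≤ ε := by
      rw [div_mul_eq_mul_div, div_le_iff₀ (by positivity)]
      nlinarith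
    exact h1.trans ((mul_le_mul_of_nonneg_right h2.le hB).trans h3)
end

/-! ### Colourings and partitions of unity from `widim` -/

/-- The index of the interval of length `1 / n` of `[0, 1]` containing `t`. -/
noncomputable def quant (n : ℕ) (t : ℝ) : Fin (n + 1) :=
  ⟨min ⌊t * n⌋₊ n, by omega⟩

lemma quant_eq {n : ℕ} (hn : 1 ≤ n) {t t' : ℝ} (h0 : 0 ≤ t) (h1 : t ≤ 1) (h0' : 0 ≤ t')
    (h1' : t' ≤ 1) (h : quant n t = quant n t') : |t - t'| ≤ 1 / n := by
  have hn0 : (0 : ℝ) < n := by exact_mod_cast hn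
  have key : ∀ u : ℝ, u ≤ 1 → ⌊u * n⌋₊ ≤ n := by
    intro u hu
    apply Nat.floor_le_of_le
    nlinarith
  have h2 : ⌊t * n⌋₊ = ⌊t' * n⌋₊ := by
    have := congrArg Fin.val h
    simp only [quant] at this
    rwa [min_eq_left (key t h1), min_eq_left (key t' h1')] at this
  have a1 := Nat.floor_le (mul_nonneg h0 hn0.le)
  have a2 := Nat.lt_floor_add_one (t * n)
  have b1 := Nat.floor_le (mul_nonneg h0' hn0.le)
  have b2 := Nat.lt_floor_add_one (t' * n)
  rw [h2] at a1 a2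
  rw [le_div_iff₀ hn0, ← abs_of_pos hn0, ← abs_mul, abs_le]
  constructor <;> nlinarith

/-- A simplex with at most `D + 1` vertices splits into `(n + 1) ^ D` pieces of diameter
`O(1 / n)`: discretize the barycentric coordinates at all vertices but one. -/
lemma color_face {E : Type*} [NormedAddCommGroup E] [NormedSpace ℝ E] (s : Finset E)
    (hs : s.Nonempty) (D : ℕ) (hD : s.card ≤ D + 1) :
    ∃ C : ℝ, 0 ≤ C ∧ ∀ n : ℕ, 1 ≤ n → ∃ c : E → (Fin D → Fin (n + 1)),
      ∀ p ∈ convexHull ℝ (s : Set E), ∀ p' ∈ convexHull ℝ (s : Set E),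
        c p = c p' → dist p p' ≤ C / n := by
  classical
  obtain ⟨s0, hs0⟩ := hs
  have hcard : Fintype.card ↥(s.erase s0) ≤ Fintype.card (Fin D) := by
    rw [Fintype.card_coe, Finset.card_erase_of_mem hs0, Fintype.card_fin]
    omega
  obtain ⟨e⟩ := Function.Embedding.nonempty_of_card_le hcard
  refine ⟨∑ y ∈ s, ‖y - s0‖, Finset.sum_nonneg fun _ _ => norm_nonneg _, fun n hn => ?_⟩
  have hw : ∀ p : E, ∃ w : E → ℝ, p ∈ convexHull ℝ (s : Set E) →
      (∀ y ∈ s, 0 ≤ w y) ∧ ∑ y ∈ s, w y = 1 ∧ ∑ y ∈ s, w y • y = p := by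
    intro p
    by_cases hp : p ∈ convexHull ℝ (s : Set E)
    · obtain ⟨w, hw⟩ := Finset.mem_convexHull'.1 hp
      exact ⟨w, fun _ => hw⟩
    · exact ⟨0, fun h => absurd h hp⟩
  choose w hw using hw
  refine ⟨fun p => Function.extend e (fun y => quant n (w p y)) 0, fun p hp p' hp' hc => ?_⟩
  obtain ⟨w0, w1, w2⟩ := hw p hp
  obtain ⟨w0', w1', w2'⟩ := hw p' hp'
  have hle : ∀ y ∈ s, w p y ≤ 1 := fun y hy =>
    w1 ▸ Finset.single_le_sum (f := w p) w0 hy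
  have hle' : ∀ y ∈ s, w p' y ≤ 1 := fun y hy =>
    w1' ▸ Finset.single_le_sum (f := w p') w0' hy
  have hdiff : ∀ y ∈ s, y ≠ s0 → |w p y - w p' y| ≤ 1 / n := by
    intro y hy hne
    have hy' : y ∈ s.erase s0 := Finset.mem_erase.2 ⟨hne, hy⟩
    have := congrFun hc (e ⟨y, hy'⟩)
    simp only [e.injective.extend_apply] at this
    exact quant_eq hn (w0 y hy) (hle y hy) (w0' y hy) (hle' y hy) this
  have hpp : p - p' = ∑ y ∈ s, (w p y - w p' y) • (y - s0) := by
    simp only [smul_sub, sub_smul, Finset.sum_sub_distrib, ← Finset.sum_smul, w1, w1', w2, w2']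
    abel
  rw [dist_eq_norm, hpp, Finset.sum_div]
  refine (norm_sum_le _ _).trans (Finset.sum_le_sum fun y hy => ?_)
  rw [norm_smul, Real.norm_eq_abs]
  by_cases hne : y = s0
  · simp [hne]
  · calc |w p y - w p' y| * ‖y - s0‖ ≤ 1 / n * ‖y - s0‖ :=
        mul_le_mul_of_nonneg_right (hdiff y hy hne) (norm_nonneg _)
      _ = ‖y - s0‖ / n := by ring

/-- A finite complex of dimension at most `D` splits into `O(n ^ D)` pieces of diameter `O(1 / n)`. -/
lemma color_space {m : ℕ} (P : Geometry.SimplicialComplex ℝ (EuclideanSpace ℝ (Fin m)))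
    (hf : P.faces.Finite) (D : ℕ) (hD : ∀ s ∈ P.faces, s.card ≤ D + 1) :
    ∃ (F : ℕ) (C : ℝ), 0 ≤ C ∧ ∀ n : ℕ, 1 ≤ n → ∃ c : P.space → Fin (F * (n + 1) ^ D),
      ∀ p p', c p = c p' → dist p p' ≤ C / n := by
  classical
  have h := fun s : P.faces => color_face s.1 (P.nonempty_of_mem_faces s.2) D (hD s.1 s.2)
  choose C hC0 hC using h
  have : Fintype P.faces := hf.fintype
  refine ⟨Fintype.card P.faces, ∑ s, C s, Finset.sum_nonneg fun s _ => hC0 s, fun n hn => ?_⟩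
  choose c hc using fun s => hC s n hn
  have hface : ∀ p : P.space, ∃ s : P.faces, p.1 ∈ convexHull ℝ (s.1 : Set _) := by
    intro p
    obtain ⟨s, hs, hps⟩ := Geometry.SimplicialComplex.mem_space_iff.1 p.2
    exact ⟨⟨s, hs⟩, hps⟩
  choose face hface using hface
  have hcard : Fintype.card (P.faces × (Fin D → Fin (n + 1)))
      = Fintype.card P.faces * (n + 1) ^ D := by simp
  refine ⟨fun p => Fintype.equivFinOfCardEq hcard (face p, c (face p) p.1), fun p p' hpp => ?_⟩
  have h1 := (Fintype.equivFinOfCardEq hcard).injective hpp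
  obtain ⟨h2, h3⟩ := Prod.mk.inj h1
  rw [← h2] at h3
  have h4 := hc (face p) p.1 (hface p) p'.1 (h2 ▸ hface p') h3
  rw [Subtype.dist_eq]
  refine h4.trans (div_le_div_of_nonneg_right ?_ (Nat.cast_nonneg n))
  exact Finset.single_le_sum (f := C) (fun s _ => hC0 s) (Finset.mem_univ _)

/-- A partition of unity at scale `r` in the target of `φ`, pulled back to `X`, whose members are
Lipschitz functions of `φ`. -/
lemma lip_partition {X Z : Type*} [TopologicalSpace X] [CompactSpace X] [PseudoMetricSpace Z]
    (φ : X → Z) (hφ : Continuous φ) (r : ℝ) (hr : 0 < r) :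
    ∃ (t : Finset X) (ψ : X → X → ℝ), (∀ j, Continuous (ψ j)) ∧ (∀ j x, 0 ≤ ψ j x) ∧
      (∀ x, ∑ j ∈ t, ψ j x = 1) ∧ (∀ j x, ψ j x ≠ 0 → dist (φ x) (φ j) < r) ∧
      ∃ C : ℝ, 0 ≤ C ∧ ∀ j ∈ t, ∀ x y, |ψ j x - ψ j y| ≤ C * dist (φ x) (φ y) := by
  classical
  obtain ⟨t, ht⟩ := isCompact_univ.elim_finite_subcover
    (fun y : X => {x | dist (φ x) (φ y) < r / 2})
    (fun y => isOpen_lt (hφ.dist continuous_const) continuous_const)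
    (fun x _ => mem_iUnion.2 ⟨x, by simpa using half_pos hr⟩)
  set u : X → X → ℝ := fun y x => max 0 (r - dist (φ x) (φ y)) with hu
  have hucont : ∀ y, Continuous (u y) := fun y =>
    continuous_const.max (continuous_const.sub (hφ.dist continuous_const))
  have hu0 : ∀ y x, 0 ≤ u y x := fun y x => le_max_left _ _
  have hulip : ∀ y x x', |u y x - u y x'| ≤ dist (φ x) (φ x') := by
    intro y x x'
    have h1 := abs_max_sub_max_le_abs (r - dist (φ x) (φ y)) (r - dist (φ x') (φ y)) 0
    rw [max_comm _ (0 : ℝ), max_comm _ (0 : ℝ)] at h1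
    refine h1.trans ?_
    have := abs_dist_sub_le (φ x) (φ x') (φ y)
    rw [abs_sub_comm]
    simpa using this
  set S : X → ℝ := fun x => ∑ y ∈ t, u y x with hS
  have hScont : Continuous S := continuous_finsetSum _ fun y _ => hucont y
  have hSr : ∀ x, r / 2 ≤ S x := by
    intro x
    have := ht (mem_univ x)
    simp only [mem_iUnion, mem_ofPred_eq] at this
    obtain ⟨y, hy, hxy⟩ := this
    have h1 : u y x ≤ S x := Finset.single_le_sum (f := fun y => u y x) (fun y _ => hu0 y x) hy
    have h2 : r - dist (φ x) (φ y) ≤ u y x := le_max_right _ _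
    linarith
  have hSpos : ∀ x, 0 < S x := fun x => (half_pos hr).trans_le (hSr x)
  have hSlip : ∀ x x', |S x - S x'| ≤ t.card * dist (φ x) (φ x') := by
    intro x x'
    rw [hS, ← Finset.sum_sub_distrib]
    refine (Finset.abs_sum_le_sum_abs _ _).trans ?_
    refine (Finset.sum_le_sum fun y _ => hulip y x x').trans ?_
    simp
  refine ⟨t, fun y x => u y x / S x, fun j => (hucont j).div hScont fun x => (hSpos x).ne',
    fun j x => div_nonneg (hu0 j x) (hSpos x).le, fun x => ?_, fun j x h => ?_,
    (1 + t.card) * (2 / r), by positivity, fun j hj x y => ?_⟩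
  · rw [← Finset.sum_div]
    exact div_self (hSpos x).ne'
  · by_contra hcon
    push Not at hcon
    apply h
    have : u j x = 0 := max_eq_left (by linarith)
    simp [this]
  · have hsx := hSpos x
    have hsy := hSpos y
    have huy : u j y ≤ S y := Finset.single_le_sum (f := fun j => u j y) (fun y _ => hu0 _ _) hj
    have e1 : u j x / S x - u j y / S y
        = ((u j x - u j y) + u j y / S y * (S y - S x)) / S x := by
      field_simp
      ring
    have h1 : |u j y / S y * (S y - S x)| ≤ t.card * dist (φ x) (φ y) := by
      rw [abs_mul, abs_of_nonneg (div_nonneg (hu0 j y) hsy.le), abs_sub_comm]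
      have : u j y / S y ≤ 1 := (div_le_one hsy).2 huy
      calc u j y / S y * |S x - S y| ≤ 1 * |S x - S y| :=
            mul_le_mul_of_nonneg_right this (abs_nonneg _)
        _ ≤ _ := by rw [one_mul]; exact hSlip x y
    rw [e1, abs_div, abs_of_pos hsx, div_le_iff₀ hsx]
    have h2 := (abs_add_le (u j x - u j y) (u j y / S y * (S y - S x))).trans
      (add_le_add (hulip j x y) h1)
    have h3 : 1 ≤ 2 / r * S x := by
      rw [div_mul_eq_mul_div, le_div_iff₀ hr]
      linarith [hSr x]
    have h4 : 0 ≤ (1 + (t.card : ℝ)) * dist (φ x) (φ y) := by positivity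
    nlinarith

section
variable {k : ℕ} {X : Type*} [MetricSpace X]

lemma dist_le_blockRho (T : (Fin k → ℤ) → X → X) (N : ℕ) (x y : X) (a : Fin k → Fin N) :
    dist (T (fun i => (a i : ℤ)) x) (T (fun i => (a i : ℤ)) y) ≤ blockRho T dist N x y :=
  le_ciSup (f := fun a : Fin k → Fin N =>
    dist (T (fun i => (a i : ℤ)) x) (T (fun i => (a i : ℤ)) y)) (Set.finite_range _).bddAbove a

/-- The standard full simplex as a simplicial complex. -/
noncomputable def fullSimplex (m : ℕ) :
    Geometry.SimplicialComplex ℝ (EuclideanSpace ℝ (Fin m)) := by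
  classical
  exact Geometry.SimplicialComplex.ofAffineIndependent
    { faces := {s | s.Nonempty ∧ (s : Set _) ⊆ range (EuclideanSpace.basisFun (Fin m) ℝ)}
      isRelLowerSet_faces := by
        intro s hs
        refine ⟨hs.1, fun t ht hne => ⟨hne, ?_⟩⟩
        exact (Finset.coe_subset.2 ht).trans hs.2 }
    (by
      refine (EuclideanSpace.basisFun (Fin m) ℝ).toBasis.linearIndependent.affineIndependent.range.mono
        fun x hx => ?_
      simp only [Set.mem_iUnion] at hx
      obtain ⟨s, hs, hx⟩ := hx
      simpa using hs.2 hx)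

/-- Every compact system admits `ε`-embeddings into finite complexes, so `widim` is attained. -/
lemma widim_nonempty [CompactSpace X] (T : (Fin k → ℤ) → X → X) (hT : IsZkAction T)
    (N : ℕ) (hN : 1 ≤ N) (ε : ℝ) (hε : 0 < ε) :
    {n : ℕ | ∃ (m : ℕ) (P : Geometry.SimplicialComplex ℝ (EuclideanSpace ℝ (Fin m))),
      P.faces.Finite ∧ (∀ s ∈ P.faces, s.card ≤ n + 1) ∧
      ∃ f : X → P.space, IsEpsEmbedding (blockRho T dist N) ε f}.Nonempty := by
  classical
  have : Nonempty (Fin N) := ⟨⟨0, hN⟩⟩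
  obtain ⟨t, ψ, hcont, h0, h1, hsupp, -⟩ := lip_partition
    (fun x (a : Fin k → Fin N) => T (fun i => (a i : ℤ)) x)
    (continuous_pi fun a => hT.cont _) (ε / 4) (by positivity)
  set e := t.equivFin
  set b := EuclideanSpace.basisFun (Fin t.card) ℝ
  have hfin : (range b).Finite := finite_range _
  have hmem : ∀ x, ∑ i, ψ (e.symm i) x • b i ∈ (fullSimplex t.card).space := by
    intro x
    rw [Geometry.SimplicialComplex.mem_space_iff]
    have hx := h1 x
    have hsum : ∑ i, ψ (e.symm i) x = 1 := by
      rw [← hx, ← Finset.sum_coe_sort t]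
      exact Equiv.sum_comp e.symm (fun j : t => ψ j x)
    refine ⟨Finset.univ.image b, ⟨?_, by rw [Finset.coe_image, Finset.coe_univ, image_univ]⟩, ?_⟩
    · rw [Finset.image_nonempty, Finset.univ_nonempty_iff]
      by_contra hcon
      rw [not_nonempty_iff] at hcon
      simp at hsum
    · refine (convex_convexHull ℝ _).sum_mem (fun i _ => h0 _ _) hsum fun i _ => ?_
      exact subset_convexHull ℝ _ (by simp)
  refine ⟨t.card, t.card, fullSimplex t.card, ?_, ?_, fun x => ⟨_, hmem x⟩, ?_, ?_⟩
  · refine Set.Finite.subset (Finset.finite_toSet (Finset.univ.image b).powerset) ?_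
    rintro s ⟨-, hs⟩
    simp only [Finset.coe_powerset, mem_preimage, mem_powerset_iff]
    simpa using hs
  · rintro s ⟨-, hs⟩
    have : s ⊆ Finset.univ.image b := by
      rw [← Finset.coe_subset]; simpa using hs
    have := (Finset.card_le_card this).trans Finset.card_image_le
    simp at this
    omega
  · refine Continuous.subtype_mk ?_ _
    exact continuous_finsetSum _ fun i _ => (hcont _).smul continuous_const
  · intro x y hxy
    have hxy' : ∑ i, ψ (e.symm i) x • b i = ∑ i, ψ (e.symm i) y • b i := congrArg Subtype.val hxy
    have heq : ∀ j ∈ t, ψ j x = ψ j y := by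
      intro j hj
      have hli := b.toBasis.linearIndependent
      rw [← sub_eq_zero, ← Finset.sum_sub_distrib] at hxy'
      simp only [← sub_smul] at hxy'
      have := Fintype.linearIndependent_iff.1 hli (fun i => ψ (e.symm i) x - ψ (e.symm i) y)
        (by simpa using hxy') (e ⟨j, hj⟩)
      simpa [sub_eq_zero] using this
    obtain ⟨j, hj, hne⟩ : ∃ j ∈ t, ψ j x ≠ 0 := by
      by_contra hcon
      push Not at hcon
      have := h1 x
      rw [Finset.sum_eq_zero hcon] at this
      norm_num at this
    have d1 := hsupp j x hne
    have d2 := hsupp j y (heq j hj ▸ hne)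
    have d3 := dist_triangle_right (fun (a : Fin k → Fin N) => T (fun i => (a i : ℤ)) x)
      (fun (a : Fin k → Fin N) => T (fun i => (a i : ℤ)) y)
      (fun (a : Fin k → Fin N) => T (fun i => (a i : ℤ)) j)
    have : blockRho T dist N x y ≤ ε / 2 := by
      refine ciSup_le fun a => ?_
      refine (dist_le_pi_dist (fun (a : Fin k → Fin N) => T (fun i => (a i : ℤ)) x)
        (fun (a : Fin k → Fin N) => T (fun i => (a i : ℤ)) y) a).trans ?_
      linarith
    linarith

/-- A partition of unity on `X`, subordinate to small `d_{[N]}`-balls, whose complexity is governed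
by `D = widim`: at resolution `1 / n` its members take only `O(n ^ D)` joint values. -/
lemma exists_partition [CompactSpace X] (T : (Fin k → ℤ) → X → X) (hT : IsZkAction T)
    (N : ℕ) (hN : 1 ≤ N) (δ : ℝ) (hδ : 0 < δ) :
    ∃ (t : Finset X) (ψ : X → X → ℝ), (∀ j, Continuous (ψ j)) ∧ (∀ j x, 0 ≤ ψ j x) ∧
      (∀ x, ∑ j ∈ t, ψ j x = 1) ∧
      (∀ j x, ψ j x ≠ 0 → ∀ a : Fin k → Fin N,
        dist (T (fun i => (a i : ℤ)) x) (T (fun i => (a i : ℤ)) j) < δ) ∧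
      ∃ (F : ℕ) (C : ℝ), 0 ≤ C ∧ ∀ n : ℕ, 1 ≤ n →
        ∃ c : X → Fin (F * (n + 1) ^ (widim X (blockRho T dist N) δ)),
          ∀ x y, c x = c y → ∀ j ∈ t, |ψ j x - ψ j y| ≤ C / n := by
  have : Nonempty (Fin N) := ⟨⟨0, hN⟩⟩
  obtain ⟨m, P, hfin, hcard, φ, hφ, hemb⟩ := Nat.sInf_mem (widim_nonempty T hT N hN δ hδ)
  change ∀ s ∈ P.faces, s.card ≤ widim X (blockRho T dist N) δ + 1 at hcard
  set D := widim X (blockRho T dist N) δ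
  obtain ⟨F, C, hC0, hC⟩ := color_space P hfin D hcard
  -- a scale `r` at which closeness in `P` forces closeness for `d_{[N]}`
  obtain ⟨r, hr, hrd⟩ : ∃ r > 0, ∀ x y, dist (φ x) (φ y) < r → ∀ a : Fin k → Fin N,
      dist (T (fun i => (a i : ℤ)) x) (T (fun i => (a i : ℤ)) y) < δ := by
    set Bad : Set (X × X) := ⋃ a : Fin k → Fin N,
      {p | δ ≤ dist (T (fun i => (a i : ℤ)) p.1) (T (fun i => (a i : ℤ)) p.2)}
    have hBc : IsCompact Bad := by
      refine (isClosed_iUnion_of_finite fun a => ?_).isCompact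
      exact isClosed_le continuous_const
        (((hT.cont _).comp continuous_fst).dist ((hT.cont _).comp continuous_snd))
    have hpos : ∀ p ∈ Bad, 0 < dist (φ p.1) (φ p.2) := by
      intro p hp
      rw [dist_pos]
      intro heq
      obtain ⟨a, ha⟩ := mem_iUnion.1 hp
      have := (dist_le_blockRho T N p.1 p.2 a).trans_lt (hemb _ _ heq)
      exact absurd ha (not_le.2 this)
    obtain ⟨r, hr, hr'⟩ : ∃ r > 0, ∀ p ∈ Bad, r ≤ dist (φ p.1) (φ p.2) := by
      rcases Bad.eq_empty_or_nonempty with he | hne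
      · exact ⟨1, one_pos, by simp [he]⟩
      · obtain ⟨p, hp, hmin⟩ := hBc.exists_isMinOn hne
          ((hφ.comp continuous_fst).dist (hφ.comp continuous_snd)).continuousOn
        exact ⟨_, hpos p hp, fun q hq => hmin hq⟩
    refine ⟨r, hr, fun x y hxy a => ?_⟩
    by_contra hcon
    exact absurd (hr' (x, y) (mem_iUnion.2 ⟨a, not_lt.1 hcon⟩)) (not_le.2 hxy)
  obtain ⟨t, ψ, h1, h2, h3, h4, C', hC', hlip⟩ := lip_partition φ hφ r hr
  refine ⟨t, ψ, h1, h2, h3, fun j x h a => hrd _ _ (h4 j x h) a, F, C' * C, by positivity,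
    fun n hn => ?_⟩
  obtain ⟨c, hc⟩ := hC n hn
  refine ⟨fun x => c (φ x), fun x y hxy j hj => (hlip j hj x y).trans ?_⟩
  rw [mul_div_assoc]
  exact mul_le_mul_of_nonneg_left (hc _ _ hxy) hC'
end

/-! ### Marker heights and the homothety estimate -/

section
variable {k : ℕ} {X : Type*}

/-- `|a|²` for a real vector `a`. -/
def esq (a : Fin k → ℝ) : ℝ := ∑ i, a i ^ 2

lemma esq_nonneg (a : Fin k → ℝ) : 0 ≤ esq a := Finset.sum_nonneg fun _ _ => sq_nonneg _

lemma abs_le_of_esq_le {a : Fin k → ℝ} {E : ℕ} (hE : 1 ≤ E) (h : esq a ≤ E) (i : Fin k) :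
    |a i| ≤ E := by
  have h1 : a i ^ 2 ≤ E := (Finset.single_le_sum (f := fun i => a i ^ 2)
    (fun _ _ => sq_nonneg _) (Finset.mem_univ i)).trans h
  have h2 : (1 : ℝ) ≤ E := by exact_mod_cast hE
  rw [← sq_abs] at h1
  by_contra hcon
  push Not at hcon
  nlinarith

/-- A marker set yields a continuous height function `τ` that vanishes along a syndetic set of
times and is below its maximal value only along an `M`-separated set of times. -/
lemma exists_height [MetricSpace X] [CompactSpace X] (T : (Fin k → ℤ) → X → X)
    (hT : IsZkAction T) (hmarker : MarkerProperty T) (M : ℕ) :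
    ∃ (τ : X → ℝ) (E : ℕ), Continuous τ ∧ 1 ≤ E ∧ (∀ x, 0 ≤ τ x) ∧
      (∀ x n m, n ≠ m → τ (T n x) < E + 1 → τ (T m x) < E + 1 → ∃ i, (M : ℤ) ≤ |n i - m i|) ∧
      (∀ (x : X) (w : Fin k → ℝ), ∃ n : Fin k → ℤ, esq (fun i => w i - n i) ≤ E ∧
        τ (T n x) = 0) := by
  classical
  obtain ⟨U, hU, hcov, hdisj⟩ := hmarker (Fintype.piFinset fun _ => Finset.Ioo (-(M : ℤ)) M)
  obtain ⟨h, hc, h0, hiff⟩ : ∃ h : X → ℝ, Continuous h ∧ (∀ x, 0 ≤ h x) ∧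
      ∀ x, 0 < h x ↔ x ∈ U := by
    rcases (Uᶜ).eq_empty_or_nonempty with he | hne
    · refine ⟨fun _ => 1, continuous_const, fun _ => zero_le_one, fun x => ?_⟩
      have : x ∈ U := by
        by_contra hx
        have : x ∈ Uᶜ := hx
        simp [he] at this
      simpa using this
    · refine ⟨fun x => Metric.infDist x Uᶜ, Metric.continuous_infDist_pt _,
        fun _ => Metric.infDist_nonneg, fun x => ?_⟩
      rw [← hU.isClosed_compl.notMem_iff_infDist_pos hne]
      simp
  have hex : ∀ x, ∃ n, 0 < h (T n x) := by
    intro x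
    have hx : x ∈ ⋃ n : Fin k → ℤ, T n '' U := hcov ▸ mem_univ x
    obtain ⟨n, u, hu, rfl⟩ := mem_iUnion.1 hx
    refine ⟨-n, (hiff _).2 ?_⟩
    rw [← hT.map_add, neg_add_cancel, hT.map_zero]
    exact hu
  obtain ⟨S, hS⟩ := isCompact_univ.elim_finite_subcover (fun n : Fin k → ℤ => {x | 0 < h (T n x)})
    (fun n => isOpen_lt continuous_const (hc.comp (hT.cont n)))
    (fun x _ => mem_iUnion.2 (hex x))
  have hSpos : ∀ x, 0 < ∑ n ∈ S, h (T n x) := by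
    intro x
    have := hS (mem_univ x)
    simp only [mem_iUnion] at this
    obtain ⟨n, hn, hx⟩ := this
    exact lt_of_lt_of_le hx (Finset.single_le_sum (f := fun n => h (T n x))
      (fun n _ => h0 _) hn)
  obtain ⟨c0, hc0, hcx⟩ : ∃ c0 > 0, ∀ x, c0 ≤ ∑ n ∈ S, h (T n x) := by
    rcases isEmpty_or_nonempty X with he | hne
    · exact ⟨1, one_pos, fun x => (he.false x).elim⟩
    · obtain ⟨y, -, hy⟩ := isCompact_univ.exists_isMinOn univ_nonempty
        (continuous_finsetSum S fun n _ => hc.comp (hT.cont n)).continuousOn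
      exact ⟨_, hSpos y, fun x => hy (mem_univ x)⟩
  set c1 := c0 / (S.card + 1) with hc1
  have hc1pos : 0 < c1 := by positivity
  have hmark : ∀ x, ∃ n ∈ S, c1 ≤ h (T n x) := by
    intro x
    by_contra hcon
    push Not at hcon
    have h1 : ∑ n ∈ S, h (T n x) ≤ ∑ _n ∈ S, c1 := Finset.sum_le_sum fun n hn => (hcon n hn).le
    rw [Finset.sum_const, nsmul_eq_mul] at h1
    have h2 : (S.card : ℝ) * c1 < c0 := by
      rw [hc1, mul_div_assoc', div_lt_iff₀ (by positivity)]
      nlinarith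
    linarith [hcx x]
  obtain ⟨R, hR⟩ : ∃ R : ℕ, ∀ n ∈ S, ∀ i, |n i| ≤ (R : ℤ) := by
    refine ⟨∑ n ∈ S, ∑ i, (n i).natAbs, fun n hn i => ?_⟩
    rw [Int.abs_eq_natAbs]
    have h1 : (n i).natAbs ≤ ∑ i, (n i).natAbs :=
      Finset.single_le_sum (f := fun i => (n i).natAbs) (fun _ _ => Nat.zero_le _)
        (Finset.mem_univ i)
    have h2 := Finset.single_le_sum (f := fun n : Fin k → ℤ => ∑ i, (n i).natAbs)
      (fun _ _ => Nat.zero_le _) hn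
    exact_mod_cast h1.trans h2
  set E : ℕ := k * (R + 1) ^ 2 + 1 with hE
  have hE0 : (0 : ℝ) < E + 1 := by positivity
  refine ⟨fun x => (E + 1) * (1 - min 1 (h x / c1)), E, ?_, by omega, fun x => ?_, ?_, ?_⟩
  · fun_prop
  · exact mul_nonneg hE0.le (sub_nonneg.2 (min_le_left _ _))
  · have hin : ∀ x, (E + 1 : ℝ) * (1 - min 1 (h x / c1)) < E + 1 → x ∈ U := by
      intro x hx
      rw [← hiff]
      by_contra hcon
      have : h x = 0 := le_antisymm (not_lt.1 hcon) (h0 x)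
      simp [this] at hx
    intro x n m hnm hn hm
    by_contra hcon
    push Not at hcon
    have hmem : n - m ∈ Fintype.piFinset fun _ : Fin k => Finset.Ioo (-(M : ℤ)) M := by
      rw [Fintype.mem_piFinset]
      intro i
      have := abs_lt.1 (hcon i)
      simpa using this
    have h1 := hdisj _ hmem (sub_ne_zero.2 hnm)
    have h2 : T n x ∈ U ∩ T (n - m) '' U := by
      refine ⟨hin _ hn, T m x, hin _ hm, ?_⟩
      rw [← hT.map_add, sub_add_cancel]
    rw [h1] at h2
    exact h2
  · intro x w
    obtain ⟨n, hn, hh⟩ := hmark (T (fun i => ⌊w i⌋) x)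
    refine ⟨n + fun i => ⌊w i⌋, ?_, ?_⟩
    · have h1 : ∀ i, (w i - ((n + fun i => ⌊w i⌋) i : ℤ)) ^ 2 ≤ ((R : ℝ) + 1) ^ 2 := by
        intro i
        have a1 := Int.floor_le (w i)
        have a2 := Int.lt_floor_add_one (w i)
        have a3 := abs_le.1 (hR n hn i)
        have a4 : (-(R : ℝ)) ≤ n i := by exact_mod_cast a3.1
        have a5 : (n i : ℝ) ≤ R := by exact_mod_cast a3.2
        simp only [Pi.add_apply, Int.cast_add]
        apply sq_le_sq'
        · linarith
        · linarith
      calc esq _ ≤ ∑ _i : Fin k, ((R : ℝ) + 1) ^ 2 := Finset.sum_le_sum fun i _ => h1 i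
        _ = k * ((R : ℝ) + 1) ^ 2 := by simp
        _ ≤ E := by rw [hE]; push_cast; linarith
    · rw [hT.map_add]
      have : 1 ≤ h (T n (T (fun i => ⌊w i⌋) x)) / c1 := (one_le_div hc1pos).2 hh
      simp only [min_eq_left this, sub_self, mul_zero]

/-- The homothety estimate. If at the point `w = i / (q - 1)` the centre `n` costs no more than `m`
for the cost `|w - n|² + (q / (q - 1)) τ`, then for the cost `|s - n|² + τ` the centre `n` beats `m` by
a margin `1` at every point `s` of the `R`-neighbourhood of `(i + n) / q`, a point which lies on the
segment from `w` to `n`. -/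
lemma cell_estimate (q R M : ℕ) (hq : 2 ≤ q) (hM : 2 * q * R + q + k * (q * R) ^ 2 ≤ M)
    (i n m : Fin k → ℤ) (tn tm : ℝ)
    (hmin : ((q : ℝ) - 1) * esq (fun j => (i j : ℝ) / (q - 1) - n j) + q * tn
      ≤ ((q : ℝ) - 1) * esq (fun j => (i j : ℝ) / (q - 1) - m j) + q * tm)
    (hsep : ∃ j, (M : ℤ) ≤ |n j - m j|)
    (s : Fin k → ℝ) (hs : ∀ j, |q * s j - (i j + n j)| ≤ q * R) :
    esq (fun j => s j - n j) + tn + 1 ≤ esq (fun j => s j - m j) + tm := by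
  have hq' : (2 : ℝ) ≤ q := by exact_mod_cast hq
  have hp : (0 : ℝ) < q - 1 := by linarith
  have hM' : 2 * (q : ℝ) * R + q + k * (q * R) ^ 2 ≤ M := by exact_mod_cast hM
  have hid : (q : ℝ) * (esq (fun j => s j - m j) - esq (fun j => s j - n j))
      = ((q : ℝ) - 1) * (esq (fun j => (i j : ℝ) / (q - 1) - m j)
          - esq (fun j => (i j : ℝ) / (q - 1) - n j))
        + ∑ j, (((n j : ℝ) - m j) ^ 2 + 2 * (q * s j - (i j + n j)) * (n j - m j)) := by
    unfold esq
    rw [← Finset.sum_sub_distrib, ← Finset.sum_sub_distrib, Finset.mul_sum, Finset.mul_sum,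
      ← Finset.sum_add_distrib]
    refine Finset.sum_congr rfl fun j _ => ?_
    field_simp
    ring
  have hterm : ∀ j, -((q * R : ℝ) ^ 2)
      ≤ ((n j : ℝ) - m j) ^ 2 + 2 * (q * s j - (i j + n j)) * (n j - m j) := by
    intro j
    have h1 : (q * s j - (i j + n j)) ^ 2 ≤ (q * R : ℝ) ^ 2 := by
      rw [← sq_abs]
      exact pow_le_pow_left₀ (abs_nonneg _) (hs j) 2
    nlinarith [sq_nonneg (((n j : ℝ) - m j) + (q * s j - (i j + n j)))]
  have hsum : (q : ℝ) ≤ ∑ j, (((n j : ℝ) - m j) ^ 2 + 2 * (q * s j - (i j + n j)) * (n j - m j)) := by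
    obtain ⟨j0, hj0⟩ := hsep
    have hj : (M : ℝ) ≤ |(n j0 : ℝ) - m j0| := by exact_mod_cast hj0
    rw [← Finset.add_sum_erase _ _ (Finset.mem_univ j0)]
    have h1 : ∑ j ∈ Finset.univ.erase j0, -((q * R : ℝ) ^ 2) ≤
        ∑ j ∈ Finset.univ.erase j0,
          (((n j : ℝ) - m j) ^ 2 + 2 * (q * s j - (i j + n j)) * (n j - m j)) :=
      Finset.sum_le_sum fun j _ => hterm j
    have h2 : -(k * (q * R : ℝ) ^ 2) ≤ ∑ j ∈ Finset.univ.erase j0, -((q * R : ℝ) ^ 2) := by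
      rw [Finset.sum_const, nsmul_eq_mul, mul_neg, neg_le_neg_iff]
      apply mul_le_mul_of_nonneg_right _ (sq_nonneg _)
      exact_mod_cast (Finset.card_erase_le.trans (by simp))
    have h3 : (q : ℝ) + k * (q * R : ℝ) ^ 2 ≤
        ((n j0 : ℝ) - m j0) ^ 2 + 2 * (q * s j0 - (i j0 + n j0)) * (n j0 - m j0) := by
      set d : ℝ := (n j0 : ℝ) - m j0
      set β : ℝ := q * s j0 - (i j0 + n j0)
      have hβ : |β| ≤ q * R := hs j0
      have h4 : -(|β| * |d|) ≤ β * d := by rw [← abs_mul]; exact neg_abs_le _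
      have h5 : |β| * |d| ≤ q * R * |d| := mul_le_mul_of_nonneg_right hβ (abs_nonneg _)
      have h6 : d ^ 2 = |d| ^ 2 := (sq_abs d).symm
      have h7 : (q : ℝ) + k * (q * R : ℝ) ^ 2 ≤ |d| - 2 * (q * R) := by linarith
      have h8 : (0 : ℝ) ≤ k * (q * R : ℝ) ^ 2 := by positivity
      have h9 : (0 : ℝ) ≤ q * R := by positivity
      have h10 : 1 ≤ |d| := by linarith
      nlinarith
    linarith
  have : (q : ℝ) * (tn - tm + 1) ≤ q * (esq (fun j => s j - m j) - esq (fun j => s j - n j)) := by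
    rw [hid]
    nlinarith
  have := le_of_mul_le_mul_left this (by linarith)
  linarith
end

/-! ### The continuous Rokhlin lemma -/

/-- A partition of unity attached to finitely many continuous costs, concentrated on the costs that
are within `1` of the smallest one. -/
lemma exists_softmin {ι X : Type*} [TopologicalSpace X] (S : Finset ι) (hS : S.Nonempty)
    (c : ι → X → ℝ) (hc : ∀ n, Continuous (c n)) :
    ∃ p : ι → X → ℝ, (∀ n, Continuous (p n)) ∧ (∀ n x, 0 ≤ p n x) ∧ (∀ x, ∑ n ∈ S, p n x = 1) ∧
      ∀ x, ∀ n ∈ S, (∀ m ∈ S, m ≠ n → c n x + 1 ≤ c m x) → p n x = 1 := by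
  classical
  set l : ι → X → ℝ := fun n x => ∏ m ∈ S, max 0 (min 1 (c m x - c n x + 1)) with hl
  have hlc : ∀ n, Continuous (l n) := fun n =>
    continuous_finsetProd _ fun m _ => continuous_const.max
      (continuous_const.min (((hc m).sub (hc n)).add continuous_const))
  have hl0 : ∀ n x, 0 ≤ l n x := fun n x => Finset.prod_nonneg fun m _ => le_max_left _ _
  have hl1 : ∀ x, ∀ n ∈ S, (∀ m ∈ S, c n x ≤ c m x) → l n x = 1 := by
    intro x n _ h
    refine Finset.prod_eq_one fun m hm => ?_
    rw [min_eq_left (by linarith [h m hm]), max_eq_right zero_le_one]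
  have hpos : ∀ x, 0 < ∑ n ∈ S, l n x := by
    intro x
    obtain ⟨n, hn, hmin⟩ := S.exists_min_image (fun n => c n x) hS
    have h1 := hl1 x n hn hmin
    have h2 := Finset.single_le_sum (f := fun n => l n x) (fun n _ => hl0 n x) hn
    simp only [h1] at h2
    linarith
  refine ⟨fun n x => l n x / ∑ m ∈ S, l m x,
    fun n => (hlc n).div (continuous_finsetSum _ fun m _ => hlc m) fun x => (hpos x).ne',
    fun n x => div_nonneg (hl0 n x) (hpos x).le, fun x => ?_, fun x n hn h => ?_⟩
  · rw [← Finset.sum_div]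
    exact div_self (hpos x).ne'
  · have h1 : l n x = 1 := hl1 x n hn fun m hm => by
      by_cases hmn : m = n
      · rw [hmn]
      · linarith [h m hm hmn]
    have h2 : ∑ m ∈ S, l m x = l n x := by
      refine Finset.sum_eq_single_of_mem n hn fun m hm hmn => ?_
      refine Finset.prod_eq_zero hn ?_
      rw [max_eq_left]
      exact (min_le_right _ _).trans (by linarith [h m hm hmn])
    simp only [h2, h1, div_one]

section
variable {k : ℕ} {X : Type*}

/-- Coordinatewise residue modulo `N`. -/
def res (N : ℕ) (hN : 1 ≤ N) (n : Fin k → ℤ) : Fin k → Fin N := fun i =>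
  ⟨(n i % N).toNat, by
    have h1 := Int.emod_lt_of_pos (n i) (show (0 : ℤ) < N by omega)
    have h2 := Int.emod_nonneg (n i) (show (N : ℤ) ≠ 0 by omega)
    omega⟩

lemma res_coe (N : ℕ) (hN : 1 ≤ N) (n : Fin k → ℤ) (i : Fin k) :
    ((res N hN n i : ℕ) : ℤ) = n i % N := by
  have h2 := Int.emod_nonneg (n i) (show (N : ℤ) ≠ 0 by omega)
  simp only [res]
  omega

/-- `b` is a base point for `x`: the sites of the block `b + [N]` carry their own position in the
block as a weight-one label. -/
def GoodBase {N : ℕ} (T : (Fin k → ℤ) → X → X) (w : (Fin k → Fin N) → X → ℝ) (x : X)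
    (b : Fin k → ℤ) : Prop :=
  ∀ a : Fin k → Fin N, w a (T (fun i => b i + (a i : ℤ)) x) = 1

/-- The site `v` lies in the block of some base point for `x`. -/
def GoodSite {N : ℕ} (T : (Fin k → ℤ) → X → X) (w : (Fin k → Fin N) → X → ℝ) (x : X)
    (v : Fin k → ℤ) : Prop :=
  ∃ (b : Fin k → ℤ) (a : Fin k → Fin N), v = (fun i => b i + (a i : ℤ)) ∧ GoodBase T w x b

/-- The centre of the cell containing `i / (q - 1)`, with heights multiplied by `q / (q - 1)`: a cost
minimiser exists since only finitely many times can compete with a nearby time of height `0`. -/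
lemma exists_centre (T : (Fin k → ℤ) → X → X) (τ : X → ℝ) (E q : ℕ)
    (hE : 1 ≤ E) (hq : 2 ≤ q) (hτ0 : ∀ x, 0 ≤ τ x) (x : X)
    (hsyn : ∀ w : Fin k → ℝ, ∃ n : Fin k → ℤ, esq (fun i => w i - n i) ≤ E ∧ τ (T n x) = 0)
    (i : Fin k → ℤ) :
    ∃ n : Fin k → ℤ, esq (fun j => (i j : ℝ) / (q - 1) - n j) ≤ E ∧ τ (T n x) < E + 1 ∧
      ∀ m : Fin k → ℤ, ((q : ℝ) - 1) * esq (fun j => (i j : ℝ) / (q - 1) - n j) + q * τ (T n x)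
        ≤ ((q : ℝ) - 1) * esq (fun j => (i j : ℝ) / (q - 1) - m j) + q * τ (T m x) := by
  have hq' : (2 : ℝ) ≤ q := by exact_mod_cast hq
  have hp : (0 : ℝ) < q - 1 := by linarith
  set w : Fin k → ℝ := fun j => (i j : ℝ) / (q - 1)
  set cost : (Fin k → ℤ) → ℝ := fun n =>
    ((q : ℝ) - 1) * esq (fun j => w j - n j) + q * τ (T n x) with hcost
  obtain ⟨n0, hn0, hn0'⟩ := hsyn w
  have hn0c : cost n0 ≤ (q - 1) * E := by
    simp only [hcost, hn0', mul_zero, add_zero]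
    exact mul_le_mul_of_nonneg_left hn0 hp.le
  set S : Finset (Fin k → ℤ) :=
    Fintype.piFinset fun j => Finset.Icc (⌊w j⌋ - E) (⌊w j⌋ + E + 1)
  have hmemS : ∀ n : Fin k → ℤ, esq (fun j => w j - n j) ≤ E → n ∈ S := by
    intro n hn
    rw [Fintype.mem_piFinset]
    intro j
    have h1 := abs_le.1 (abs_le_of_esq_le hE hn j)
    have a1 := Int.floor_le (w j)
    have a2 := Int.lt_floor_add_one (w j)
    rw [Finset.mem_Icc]
    constructor
    · have : ((⌊w j⌋ - E : ℤ) : ℝ) ≤ n j := by push_cast; linarith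
      exact_mod_cast this
    · have : ((n j : ℤ) : ℝ) ≤ ((⌊w j⌋ + E + 1 : ℤ) : ℝ) := by push_cast; linarith
      exact_mod_cast this
  obtain ⟨n, hn, hmin⟩ := S.exists_min_image cost ⟨n0, hmemS n0 hn0⟩
  have hle : cost n ≤ (q - 1) * E := (hmin n0 (hmemS n0 hn0)).trans hn0c
  have he := esq_nonneg (fun j => w j - n j)
  have ht := hτ0 (T n x)
  have hEpos : (0 : ℝ) ≤ E := Nat.cast_nonneg _
  refine ⟨n, ?_, ?_, fun m => ?_⟩
  · simp only [hcost] at hle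
    nlinarith
  · simp only [hcost] at hle
    nlinarith
  · by_cases hm : m ∈ S
    · exact hmin m hm
    · have h1 : ¬ esq (fun j => w j - m j) ≤ E := fun h => hm (hmemS m h)
      push Not at h1
      refine hle.trans ?_
      have := hτ0 (T m x)
      nlinarith

/-- The combinatorial heart of the tiling lemma: on a large box `[0, N)^k`, all but a fraction `γ` of
the sites lie deep inside the cell of some centre `y`. -/
lemma deep_sites (T : (Fin k → ℤ) → X → X) (τ : X → ℝ) (E q R M N : ℕ) (γ : ℝ)
    (hE : 1 ≤ E) (hq : 2 ≤ q) (hM : 2 * q * (R + 1) + q + k * (q * (R + 1)) ^ 2 ≤ M)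
    (hτ0 : ∀ x, 0 ≤ τ x) (x : X)
    (hsep : ∀ n m, n ≠ m → τ (T n x) < E + 1 → τ (T m x) < E + 1 → ∃ i, (M : ℤ) ≤ |n i - m i|)
    (hsyn : ∀ w : Fin k → ℝ, ∃ n : Fin k → ℤ, esq (fun i => w i - n i) ≤ E ∧ τ (T n x) = 0)
    (hqγ : 2 * k ≤ q * γ) (hN : 2 * E ≤ N) (P : (Fin k → ℤ) → Prop) [DecidablePred P]
    (hP : ∀ v y : Fin k → ℤ, (∀ s : Fin k → ℤ, (∀ j, |s j - v j| ≤ (R : ℤ)) →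
      esq (fun j => (s j : ℝ) - y j) + τ (T y x) ≤ E ∧
      ∀ m, m ≠ y → esq (fun j => (s j : ℝ) - y j) + τ (T y x) + 1
        ≤ esq (fun j => (s j : ℝ) - m j) + τ (T m x)) → P v) :
    (((Fintype.piFinset fun _ : Fin k => Finset.Ico (0 : ℤ) N).filter fun v => ¬ P v).card : ℝ)
      ≤ γ * (N : ℝ) ^ k := by
  classical
  have hq' : (2 : ℝ) ≤ q := by exact_mod_cast hq
  have hp : (0 : ℝ) < q - 1 := by linarith
  choose ν hν1 hν2 hν3 using exists_centre T τ E q hE hq hτ0 x hsyn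
  have hest : ∀ i m, m ≠ ν i → τ (T m x) < E + 1 → ∀ s : Fin k → ℝ,
      (∀ j, |q * s j - (i j + ν i j)| ≤ q * (R + 1 : ℕ)) →
      esq (fun j => s j - ν i j) + τ (T (ν i) x) + 1 ≤ esq (fun j => s j - m j) + τ (T m x) := by
    intro i m hm hτm s hs
    exact cell_estimate q (R + 1) M hq hM i (ν i) m _ _ (hν3 i m)
      (hsep _ _ hm.symm (hν2 i) hτm) s hs
  -- distinct `i` are sent to distinct points `i + ν i`
  have hinj : ∀ i i', (∀ j, i j + ν i j = i' j + ν i' j) → i = i' := by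
    intro i i' h
    have hνν : ν i = ν i' := by
      by_contra hne
      have h1 := hest i (ν i') (Ne.symm hne) (hν2 i') (fun j => ((i j + ν i j : ℤ) : ℝ) / q)
        (fun j => by
          rw [mul_div_cancel₀ _ (by linarith)]; push_cast; simp; positivity)
      have h2 := hest i' (ν i) hne (hν2 i) (fun j => ((i j + ν i j : ℤ) : ℝ) / q)
        (fun j => by
          rw [mul_div_cancel₀ _ (by linarith), h j]; push_cast; simp; positivity)
      linarith
    funext j
    have := h j
    rw [hνν] at this
    omega
  set vv : (Fin k → ℤ) → (Fin k → ℤ) := fun i j => (i j + ν i j) / (q : ℤ) with hvv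
  have hq0 : (0 : ℤ) < q := by omega
  have hgood : ∀ i, P (vv i) := by
    intro i
    refine hP (vv i) (ν i) fun s hs => ?_
    have hs' : ∀ j, |(q : ℝ) * (s j : ℝ) - (i j + ν i j)| ≤ q * (R + 1 : ℕ) := by
      intro j
      have h1 := Int.mul_ediv_add_emod (i j + ν i j) q
      have h2 := Int.emod_nonneg (i j + ν i j) hq0.ne'
      have h3 := Int.emod_lt_of_pos (i j + ν i j) hq0
      have h4 := abs_le.1 (hs j)
      have h5 : |(q : ℤ) * s j - (i j + ν i j)| ≤ q * (R + 1) := by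
        simp only [hvv] at h4
        rw [abs_le]
        constructor <;> nlinarith
      exact_mod_cast h5
    have hlow : esq (fun j => (s j : ℝ) - ν i j) + τ (T (ν i) x) ≤ E := by
      obtain ⟨m', hm', hm0⟩ := hsyn (fun j => (s j : ℝ))
      by_cases hmm : m' = ν i
      · rw [← hmm, hm0, add_zero]; exact hm'
      · have := hest i m' hmm (by rw [hm0]; positivity) (fun j => (s j : ℝ)) hs'
        rw [hm0, add_zero] at this
        linarith
    refine ⟨hlow, fun m hm => ?_⟩
    by_cases hτm : τ (T m x) < E + 1
    · exact hest i m hm hτm (fun j => (s j : ℝ)) hs'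
    · have := esq_nonneg (fun j => (s j : ℝ) - m j)
      linarith
  set I : Finset (Fin k → ℤ) :=
    Fintype.piFinset fun _ : Fin k => Finset.Ico (E : ℤ) (((q : ℤ) - 1) * N - E)
  set Λ : Finset (Fin k → ℤ) := Fintype.piFinset fun _ : Fin k => Finset.Ico (0 : ℤ) N
  have hmaps : ∀ i ∈ I, vv i ∈ Λ.filter P := by
    intro i hi
    rw [Finset.mem_filter]
    refine ⟨?_, hgood i⟩
    rw [Fintype.mem_piFinset] at hi ⊢
    intro j
    have hi1 := Finset.mem_Ico.1 (hi j)
    have h1 := abs_le.1 (abs_le_of_esq_le hE (hν1 i) j)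
    have b1 : (E : ℝ) ≤ i j := by exact_mod_cast hi1.1
    have b2 : (i j : ℝ) < ((q : ℝ) - 1) * N - E := by exact_mod_cast hi1.2
    have hw0 : 0 ≤ (i j : ℝ) / (q - 1) := div_nonneg (by
      have : (0 : ℝ) ≤ E := Nat.cast_nonneg _
      linarith) hp.le
    have hw1 : (i j : ℝ) / (q - 1) < N := by
      rw [div_lt_iff₀ hp]
      have : (0 : ℝ) ≤ E := Nat.cast_nonneg _
      linarith
    have c1 : (0 : ℝ) ≤ ((i j + ν i j : ℤ) : ℝ) := by push_cast; linarith
    have c2 : ((i j + ν i j : ℤ) : ℝ) < ((N * q : ℤ) : ℝ) := by push_cast; linarith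
    rw [Finset.mem_Ico]
    refine ⟨Int.ediv_nonneg (by exact_mod_cast c1) hq0.le, ?_⟩
    exact Int.ediv_lt_of_lt_mul hq0 (by exact_mod_cast c2)
  have hfib : ∀ v ∈ Λ.filter P, (I.filter fun i => vv i = v).card ≤ q ^ k := by
    intro v _
    have hcard : (Fintype.piFinset fun j : Fin k => Finset.Ico ((q : ℤ) * v j) (q * v j + q)).card
        = q ^ k := by
      simp [Fintype.card_piFinset]
    rw [← hcard]
    refine Finset.card_le_card_of_injOn (fun i j => i j + ν i j) ?_ ?_
    · intro i hi
      have hi2 := (Finset.mem_filter.1 (Finset.mem_coe.1 hi)).2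
      rw [Finset.mem_coe, Fintype.mem_piFinset]
      intro j
      have h1 := Int.mul_ediv_add_emod (i j + ν i j) q
      have h2 := Int.emod_nonneg (i j + ν i j) hq0.ne'
      have h3 := Int.emod_lt_of_pos (i j + ν i j) hq0
      have h4 : (i j + ν i j) / (q : ℤ) = v j := congrFun hi2 j
      rw [h4] at h1
      rw [Finset.mem_Ico]
      constructor <;> linarith
    · intro i _ i' _ h
      exact hinj i i' fun j => congrFun h j
  have hcount : I.card ≤ q ^ k * (Λ.filter P).card :=
    Finset.card_le_mul_card_image_of_maps_to hmaps _ hfib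
  have hqN : (0 : ℤ) ≤ ((q : ℤ) - 1) * N - E - E := by
    have : (1 : ℤ) ≤ (q : ℤ) - 1 := by omega
    have : (2 * E : ℤ) ≤ N := by exact_mod_cast hN
    nlinarith
  have hI : (I.card : ℝ) = (((q : ℝ) - 1) * N - 2 * E) ^ k := by
    have h1 : I.card = (((q : ℤ) - 1) * N - E - E).toNat ^ k := by
      simp [I, Fintype.card_piFinset]
    rw [h1, Nat.cast_pow]
    congr 1
    have : (((((q : ℤ) - 1) * N - E - E).toNat : ℤ) : ℝ) = (((q : ℤ) - 1) * N - E - E : ℤ) := by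
      rw [Int.toNat_of_nonneg hqN]
    push_cast at this
    linarith
  have hΛ : (Λ.card : ℝ) = (N : ℝ) ^ k := by
    simp [Λ, Fintype.card_piFinset]
  have hsplit : ((Λ.filter P).card : ℝ) + ((Λ.filter fun v => ¬ P v).card : ℝ) = (N : ℝ) ^ k := by
    rw [← hΛ]
    exact_mod_cast Finset.card_filter_add_card_filter_not P
  have hcount' : (((q : ℝ) - 1) * N - 2 * E) ^ k ≤ (q : ℝ) ^ k * ((Λ.filter P).card : ℝ) := by
    rw [← hI]
    exact_mod_cast hcount
  have hNpos : (0 : ℝ) < N := by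
    have : 0 < N := by omega
    exact_mod_cast this
  have hN' : (2 * E : ℝ) ≤ N := by exact_mod_cast hN
  have hbern : 1 - γ ≤ (1 + (-(2 / (q : ℝ)))) ^ k := by
    have h1 : (2 : ℝ) / q ≤ 1 := by rw [div_le_one (by linarith)]; exact hq'
    have h2 := one_add_mul_le_pow (a := -(2 / (q : ℝ))) (by linarith) k
    have h3 : (k : ℝ) * (2 / q) ≤ γ := by
      rw [mul_div_assoc', div_le_iff₀ (by linarith)]
      linarith
    linarith
  have h5 : ((q : ℝ) * N * (1 + (-(2 / (q : ℝ))))) ^ k ≤ (((q : ℝ) - 1) * N - 2 * E) ^ k := by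
    have e : (q : ℝ) * N * (1 + (-(2 / (q : ℝ)))) = (q - 2) * N := by
      field_simp
      ring
    rw [e]
    refine pow_le_pow_left₀ (mul_nonneg (by linarith) hNpos.le) ?_ k
    linarith
  have h6 := h5.trans hcount'
  rw [mul_pow, mul_pow, mul_assoc] at h6
  have h7 := le_of_mul_le_mul_left h6 (by positivity)
  have h8 : (N : ℝ) ^ k * (1 - γ) ≤ (N : ℝ) ^ k * (1 + (-(2 / (q : ℝ)))) ^ k :=
    mul_le_mul_of_nonneg_left hbern (by positivity)
  linarith

/-- A continuous Rokhlin lemma: labels `w` in `[N₀]` which, along every orbit, have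
weight one and follow the block structure outside a set of sites of density at most `γ`. -/
lemma rokhlin [MetricSpace X] [CompactSpace X] (T : (Fin k → ℤ) → X → X)
    (hT : IsZkAction T) (hmarker : MarkerProperty T) (N₀ : ℕ) (hN₀ : 1 ≤ N₀) (γ : ℝ) (hγ : 0 < γ) :
    ∃ w : (Fin k → Fin N₀) → X → ℝ, (∀ a, Continuous (w a)) ∧ (∀ a x, 0 ≤ w a x) ∧
      (∀ x, ∑ a, w a x = 1) ∧ ∃ N₁ : ℕ, ∀ N ≥ N₁, ∀ x, ∀ P : (Fin k → ℤ) → Prop,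
        ∀ _ : DecidablePred P, (∀ v, GoodSite T w x v → P v) →
        (((Fintype.piFinset fun _ : Fin k => Finset.Ico (0 : ℤ) N).filter
          fun v => ¬ P v).card : ℝ) ≤ γ * (N : ℝ) ^ k := by
  classical
  obtain ⟨q, hq⟩ : ∃ q : ℕ, 2 ≤ q ∧ 2 * k ≤ q * γ := by
    obtain ⟨q, hq⟩ := exists_nat_ge (2 * k / γ)
    refine ⟨q + 2, by omega, ?_⟩
    rw [div_le_iff₀ hγ] at hq
    push_cast
    nlinarith
  set M := 2 * q * (N₀ + 1) + q + k * (q * (N₀ + 1)) ^ 2 with hM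
  obtain ⟨τ, E, hτc, hE, hτ0, hsep, hsyn⟩ := exists_height T hT hmarker M
  set S : Finset (Fin k → ℤ) := Fintype.piFinset fun _ => Finset.Icc (-(E : ℤ)) E
  have hS : S.Nonempty := ⟨0, by simp [S]⟩
  obtain ⟨p, hpc, hp0, hp1, hpw⟩ := exists_softmin S hS
    (fun n x => esq (fun j => (n j : ℝ)) + τ (T n x))
    (fun n => continuous_const.add (hτc.comp (hT.cont n)))
  set w : (Fin k → Fin N₀) → X → ℝ := fun a x =>
    ∑ n ∈ S.filter (fun n => res N₀ hN₀ (-n) = a), p n x with hw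
  have hw0 : ∀ a x, 0 ≤ w a x := fun a x => Finset.sum_nonneg fun n _ => hp0 n x
  have hw1 : ∀ x, ∑ a, w a x = 1 := fun x => by
    rw [← hp1 x]
    exact Finset.sum_fiberwise S (fun n => res N₀ hN₀ (-n)) (fun n => p n x)
  refine ⟨w, fun a => continuous_finsetSum _ fun n _ => hpc n, hw0, hw1,
    2 * E, fun N hN x P _ hP => ?_⟩
  refine deep_sites T τ E q N₀ M N γ hE hq.1 le_rfl hτ0 x (hsep x) (hsyn x) hq.2 hN P ?_
  intro v y hvy
  refine hP v ?_
  have hlabel : ∀ s : Fin k → ℤ, (∀ j, |s j - v j| ≤ (N₀ : ℤ)) →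
      w (res N₀ hN₀ (s - y)) (T s x) = 1 := by
    intro s hs
    obtain ⟨h1, h2⟩ := hvy s hs
    have hcost : ∀ m : Fin k → ℤ, esq (fun j => ((m j : ℤ) : ℝ)) + τ (T m (T s x))
        = esq (fun j => (s j : ℝ) - ((m + s) j : ℤ)) + τ (T (m + s) x) := by
      intro m
      rw [hT.map_add]
      congr 1
      unfold esq
      refine Finset.sum_congr rfl fun j _ => ?_
      simp
    have hyS : y - s ∈ S := by
      rw [Fintype.mem_piFinset]
      intro j
      have h3 : esq (fun j => (s j : ℝ) - y j) ≤ E := by linarith [hτ0 (T y x)]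
      have h4 := abs_le.1 (abs_le_of_esq_le hE h3 j)
      rw [Finset.mem_Icc]
      have h5 : (-(E : ℤ) ≤ s j - y j) := by exact_mod_cast h4.1
      have h6 : (s j - y j ≤ (E : ℤ)) := by exact_mod_cast h4.2
      simp only [Pi.sub_apply]
      constructor <;> linarith
    have hone : p (y - s) (T s x) = 1 := by
      refine hpw _ _ hyS fun m _ hm => ?_
      rw [hcost, hcost, sub_add_cancel]
      refine h2 (m + s) fun h => hm ?_
      rw [← h, add_sub_cancel_right]
    refine le_antisymm ?_ ?_
    · rw [← hw1 (T s x)]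
      exact Finset.single_le_sum (f := fun a => w a (T s x)) (fun a _ => hw0 a _)
        (Finset.mem_univ _)
    · rw [← hone]
      refine Finset.single_le_sum (f := fun n => p n (T s x)) (fun n _ => hp0 n _) ?_
      rw [Finset.mem_filter, neg_sub]
      exact ⟨hyS, rfl⟩
  have hN0' : (0 : ℤ) < N₀ := by omega
  refine ⟨fun j => v j - (v j - y j) % N₀, res N₀ hN₀ (v - y), ?_, fun a => ?_⟩
  · funext j
    rw [res_coe]
    simp
  · have hres : res N₀ hN₀ ((fun i => v i - (v i - y i) % N₀ + (a i : ℤ)) - y) = a := by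
      funext j
      apply Fin.ext
      have h1 := res_coe N₀ hN₀ ((fun i => v i - (v i - y i) % N₀ + (a i : ℤ)) - y) j
      have h2 : ((fun i => v i - (v i - y i) % N₀ + (a i : ℤ)) - y) j
          = (a j : ℤ) + N₀ * ((v j - y j) / N₀) := by
        have := Int.mul_ediv_add_emod (v j - y j) N₀
        simp only [Pi.sub_apply]
        linarith
      rw [h2, Int.add_mul_emod_self_left, Int.emod_eq_of_lt (by positivity)
        (by exact_mod_cast (a j).2)] at h1
      exact_mod_cast h1
    have := hlabel (fun i => v i - (v i - y i) % N₀ + (a i : ℤ)) fun j => by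
      have h1 := Int.emod_nonneg (v j - y j) hN0'.ne'
      have h2 := Int.emod_lt_of_pos (v j - y j) hN0'
      have h3 : ((a j : ℕ) : ℤ) < N₀ := by exact_mod_cast (a j).2
      have h4 : (0 : ℤ) ≤ ((a j : ℕ) : ℤ) := by positivity
      rw [abs_le]
      constructor <;> linarith
    rwa [hres] at this
end

/-! ### Colouring orbits on boxes -/

/-- A colouring that records a subset of `Λ` with at most `α` elements together with a colour for
each of its elements. -/
lemma color_subsets {X ι : Type*} (Λ : Finset ι) (α n₁ : ℕ) (hn : 0 < n₁) (A : X → Finset ι)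
    (hA : ∀ x, A x ⊆ Λ) (hcard : ∀ x, (A x).card ≤ α) (κ : ι → X → Fin n₁) :
    ∃ c : X → Fin (2 ^ Λ.card * n₁ ^ α), ∀ x y, c x = c y →
      A x = A y ∧ ∀ b ∈ A x, κ b x = κ b y := by
  classical
  let code : Finset ι → (ι → Fin n₁) → Fin α → Fin n₁ := fun s g i =>
    if h : (i : ℕ) < s.card then g (s.equivFin.symm ⟨i, h⟩) else ⟨0, hn⟩
  have hcode : ∀ s g g', s.card ≤ α → code s g = code s g' → ∀ b ∈ s, g b = g' b := by
    intro s g g' hs h b hb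
    have hlt := (s.equivFin ⟨b, hb⟩).2
    have h1 := congrFun h ⟨s.equivFin ⟨b, hb⟩, hlt.trans_le hs⟩
    simpa [code] using h1
  have hc : Fintype.card (Λ.powerset × (Fin α → Fin n₁)) = 2 ^ Λ.card * n₁ ^ α := by
    simp
  refine ⟨fun x => Fintype.equivFinOfCardEq hc
    (⟨A x, Finset.mem_powerset.2 (hA x)⟩, code (A x) fun b => κ b x), fun x y h => ?_⟩
  have h1 := (Fintype.equivFinOfCardEq hc).injective h
  rw [Prod.mk.injEq, Subtype.mk.injEq] at h1
  refine ⟨h1.1, fun b hb => ?_⟩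
  have h2 := h1.2
  rw [← h1.1] at h2
  exact hcode (A x) (fun b => κ b x) (fun b => κ b y) (hcard x) h2 b hb

section
variable {k : ℕ} {X V : Type*} [NormedAddCommGroup V]

/-- Blocks of distinct base points are disjoint, which bounds the number of base points in a box. -/
lemma card_goodBase {N₀ : ℕ} (T : (Fin k → ℤ) → X → X) (w : (Fin k → Fin N₀) → X → ℝ)
    (hN₀ : 1 ≤ N₀) (hw0 : ∀ a x, 0 ≤ w a x) (hw1 : ∀ x, ∑ a, w a x = 1) (R : ℕ) (x : X)
    (A : Finset (Fin k → ℤ)) (hA : A ⊆ Fintype.piFinset fun _ : Fin k => Finset.Ico (0 : ℤ) R)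
    (hgood : ∀ b ∈ A, GoodBase T w x b) : A.card ≤ (R + N₀) ^ k / N₀ ^ k := by
  classical
  rw [Nat.le_div_iff_mul_le (by positivity)]
  have h1 : (A ×ˢ (Finset.univ : Finset (Fin k → Fin N₀))).card = A.card * N₀ ^ k := by
    simp [Finset.card_product]
  have h2 : (Fintype.piFinset fun _ : Fin k => Finset.Ico (0 : ℤ) (R + N₀ : ℕ)).card
      = (R + N₀) ^ k := by
    simp only [Fintype.card_piFinset, Int.card_Ico, Finset.prod_const, Finset.card_univ,
      Fintype.card_fin, sub_zero, Int.toNat_natCast]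
  rw [← h1, ← h2]
  refine Finset.card_le_card_of_injOn (fun p i => p.1 i + (p.2 i : ℤ)) ?_ ?_
  · rintro ⟨b, a⟩ hp
    have hb := hA (Finset.mem_product.1 (Finset.mem_coe.1 hp)).1
    rw [Finset.mem_coe, Fintype.mem_piFinset]
    rw [Fintype.mem_piFinset] at hb
    intro i
    have h3 := Finset.mem_Ico.1 (hb i)
    have h4 := (a i).2
    rw [Finset.mem_Ico]
    dsimp only at h3 ⊢
    omega
  · rintro ⟨b, a⟩ hp ⟨b', a'⟩ hp' h
    have g1 := hgood b (Finset.mem_product.1 (Finset.mem_coe.1 hp)).1 a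
    have g2 := hgood b' (Finset.mem_product.1 (Finset.mem_coe.1 hp')).1 a'
    dsimp only at h
    rw [← h] at g2
    have haa : a = a' := by
      by_contra hne
      have h3 := hw1 (T (fun i => b i + (a i : ℤ)) x)
      have h4 := Finset.sum_le_sum_of_subset_of_nonneg (Finset.subset_univ {a, a'})
        (fun i _ _ => hw0 i (T (fun i => b i + (a i : ℤ)) x))
      rw [Finset.sum_pair hne, g1, g2, h3] at h4
      linarith
    subst haa
    have : b = b' := by
      funext i
      have := congrFun h i
      omega
    rw [this]

/-- Recording the base points with the colour of their block, and the remaining sites with their own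
colour, determines `g` along the orbit on a box. -/
lemma orbit_color {N₀ : ℕ} (T : (Fin k → ℤ) → X → X) (w : (Fin k → Fin N₀) → X → ℝ)
    (hN₀ : 1 ≤ N₀) (hw0 : ∀ a x, 0 ≤ w a x) (hw1 : ∀ x, ∑ a, w a x = 1) (g : X → V) (e : ℝ)
    (n₁ n₂ : ℕ) (hn₁ : 0 < n₁) (hn₂ : 0 < n₂) (c₁ : X → Fin n₁) (c₂ : X → Fin n₂)
    (h₁ : ∀ x y b, GoodBase T w x b → GoodBase T w y b → c₁ (T b x) = c₁ (T b y) →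
      ∀ a : Fin k → Fin N₀, ‖g (T (fun i => b i + (a i : ℤ)) x)
        - g (T (fun i => b i + (a i : ℤ)) y)‖ ≤ e)
    (h₂ : ∀ x y, c₂ x = c₂ y → ‖g x - g y‖ ≤ e) (R β : ℕ)
    (hβ : ∀ x, ∀ P : (Fin k → ℤ) → Prop,
        ∀ _ : DecidablePred P, (∀ v, GoodSite T w x v → P v) →
        ((Fintype.piFinset fun _ : Fin k => Finset.Ico (0 : ℤ) R).filter
          fun v => ¬ P v).card ≤ β) :
    ∃ c : X → Fin ((2 ^ R ^ k * n₁ ^ ((R + N₀) ^ k / N₀ ^ k)) * (2 ^ R ^ k * n₂ ^ β)),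
      ∀ x y, c x = c y → ∀ v : Fin k → ℤ, (∀ i, (N₀ : ℤ) ≤ v i ∧ v i < R) →
        ‖g (T v x) - g (T v y)‖ ≤ e := by
  classical
  set Λ := Fintype.piFinset fun _ : Fin k => Finset.Ico (0 : ℤ) R with hΛ
  have hΛc : Λ.card = R ^ k := by simp [hΛ, Fintype.card_piFinset]
  obtain ⟨c, hc⟩ := color_subsets Λ ((R + N₀) ^ k / N₀ ^ k) n₁ hn₁
    (fun x => Λ.filter (GoodBase T w x)) (fun x => Finset.filter_subset _ _)
    (fun x => card_goodBase T w hN₀ hw0 hw1 R x _ (Finset.filter_subset _ _)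
      fun b hb => (Finset.mem_filter.1 hb).2) (fun b x => c₁ (T b x))
  obtain ⟨c', hc'⟩ := color_subsets Λ β n₂ hn₂
    (fun x => Λ.filter fun v => ¬ GoodSite T w x v) (fun x => Finset.filter_subset _ _)
    (fun x => hβ x (GoodSite T w x) _ fun v hv => hv) (fun b x => c₂ (T b x))
  rw [← hΛc]
  refine ⟨fun x => finProdFinEquiv (c x, c' x), fun x y h v hv => ?_⟩
  have h3 := finProdFinEquiv.injective h
  rw [Prod.mk.injEq] at h3
  obtain ⟨hA, hκ⟩ := hc x y h3.1
  obtain ⟨hB, hκ'⟩ := hc' x y h3.2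
  have hvΛ : v ∈ Λ := by
    rw [hΛ, Fintype.mem_piFinset]
    intro i
    rw [Finset.mem_Ico]
    have := hv i
    omega
  by_cases hgs : GoodSite T w x v
  · obtain ⟨b, a, hva, hb⟩ := hgs
    have hbΛ : b ∈ Λ := by
      rw [hΛ, Fintype.mem_piFinset]
      intro i
      rw [Finset.mem_Ico]
      have h4 := hv i
      have h5 := congrFun hva i
      have h6 := (a i).2
      omega
    have hmem : b ∈ Λ.filter (GoodBase T w x) := Finset.mem_filter.2 ⟨hbΛ, hb⟩
    have hκb := hκ b hmem
    rw [hA] at hmem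
    rw [hva]
    exact h₁ x y b hb (Finset.mem_filter.1 hmem).2 hκb a
  · exact h₂ _ _ (hκ' v (Finset.mem_filter.2 ⟨hvΛ, hgs⟩))
end

/-! ### The perturbation -/

section
variable {k : ℕ} {X V : Type*} [NormedAddCommGroup V] [NormedSpace ℝ V]

lemma norm_average_sub_le {ι : Type*} (s : Finset ι) (p : ι → ℝ) (z : ι → V) (c : V) (η : ℝ)
    (hp : ∀ i ∈ s, 0 ≤ p i) (hs : ∑ i ∈ s, p i = 1) (h : ∀ i ∈ s, p i ≠ 0 → ‖z i - c‖ ≤ η) :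
    ‖∑ i ∈ s, p i • z i - c‖ ≤ η := by
  have e : ∑ i ∈ s, p i • z i - c = ∑ i ∈ s, p i • (z i - c) := by
    simp only [smul_sub, Finset.sum_sub_distrib, ← Finset.sum_smul, hs, one_smul]
  rw [e]
  calc ‖∑ i ∈ s, p i • (z i - c)‖ ≤ ∑ i ∈ s, p i * η := by
        refine norm_sum_le_of_le _ fun i hi => ?_
        rw [norm_smul, Real.norm_of_nonneg (hp i hi)]
        by_cases h0 : p i = 0
        · simp [h0]
        · exact mul_le_mul_of_nonneg_left (h i hi h0) (hp i hi)
    _ = η := by rw [← Finset.sum_mul, hs, one_mul]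

lemma norm_sum_smul_sub_le {ι : Type*} (s : Finset ι) (p q : ι → ℝ) (z : ι → V) (B c : ℝ)
    (hz : ∀ i ∈ s, ‖z i‖ ≤ B) (h : ∀ i ∈ s, |p i - q i| ≤ c) :
    ‖∑ i ∈ s, p i • z i - ∑ i ∈ s, q i • z i‖ ≤ s.card * (c * B) := by
  rw [← Finset.sum_sub_distrib, ← nsmul_eq_mul, ← Finset.sum_const]
  refine norm_sum_le_of_le _ fun i hi => ?_
  rw [← sub_smul, norm_smul, Real.norm_eq_abs]
  exact mul_le_mul (h i hi) (hz i hi) (norm_nonneg _) ((abs_nonneg _).trans (h i hi))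

/-- The perturbation of `f`: at a point labelled `a`, the value is read off from the position of
`T^{-a} x` in the partition of unity `ψ`. -/
lemma exists_perturb {K : Set V} (hK : Convex ℝ K) [MetricSpace X] [CompactSpace X]
    (T : (Fin k → ℤ) → X → X) (hT : IsZkAction T) (f : C(X, K)) (η δ : ℝ) (hη : 0 ≤ η)
    (hf : ∀ x y, dist x y < δ → dist (f x) (f y) ≤ η) (N₀ : ℕ)
    (t : Finset X) (ψ : X → X → ℝ) (hψc : ∀ j, Continuous (ψ j)) (hψ0 : ∀ j x, 0 ≤ ψ j x)
    (hψ1 : ∀ x, ∑ j ∈ t, ψ j x = 1)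
    (hψ : ∀ j x, ψ j x ≠ 0 → ∀ a : Fin k → Fin N₀,
        dist (T (fun i => (a i : ℤ)) x) (T (fun i => (a i : ℤ)) j) < δ)
    (w : (Fin k → Fin N₀) → X → ℝ) (hwc : ∀ a, Continuous (w a)) (hw0 : ∀ a x, 0 ≤ w a x)
    (hw1 : ∀ x, ∑ a, w a x = 1) :
    ∃ g : C(X, K), dist g f ≤ η ∧ ∀ x, (g x : V) = ∑ a : Fin k → Fin N₀, w a x •
      ∑ j ∈ t, ψ j (T (-fun i => (a i : ℤ)) x) • (f (T (fun i => (a i : ℤ)) j) : V) := by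
  have hmem : ∀ x, ∑ a : Fin k → Fin N₀, w a x •
      ∑ j ∈ t, ψ j (T (-fun i => (a i : ℤ)) x) • (f (T (fun i => (a i : ℤ)) j) : V) ∈ K := by
    intro x
    refine hK.sum_mem (fun a _ => hw0 a x) (hw1 x) fun a _ => ?_
    exact hK.sum_mem (fun j _ => hψ0 j _) (hψ1 _) fun j _ => (f _).2
  have hcont : Continuous fun x => ∑ a : Fin k → Fin N₀, w a x •
      ∑ j ∈ t, ψ j (T (-fun i => (a i : ℤ)) x) • (f (T (fun i => (a i : ℤ)) j) : V) := by
    refine continuous_finsetSum _ fun a _ => (hwc a).smul ?_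
    exact continuous_finsetSum _ fun j _ =>
      ((hψc j).comp (hT.cont _)).smul continuous_const
  refine ⟨⟨fun x => ⟨_, hmem x⟩, hcont.subtype_mk hmem⟩, ?_, fun x => rfl⟩
  rw [ContinuousMap.dist_le hη]
  intro x
  rw [Subtype.dist_eq, dist_eq_norm]
  refine norm_average_sub_le _ _ _ _ _ (fun a _ => hw0 a x) (hw1 x) fun a _ _ => ?_
  refine norm_average_sub_le _ _ _ _ _ (fun j _ => hψ0 j _) (hψ1 _) fun j _ hj => ?_
  have h1 := hψ j _ hj a
  rw [← hT.map_add, add_neg_cancel, hT.map_zero, dist_comm] at h1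
  have h2 := hf _ _ h1
  rwa [Subtype.dist_eq, dist_eq_norm] at h2

/-- Recording weights `ψ j (T^b x)` at base points and all weights `w a x * ψ j (T^{-a} x)` at other
sites up to an error of order `1 / n` determines the perturbed function up to the same order. -/
lemma perturb_color {K : Set V} [MetricSpace X]
    (T : (Fin k → ℤ) → X → X) (hT : IsZkAction T) (f g : C(X, K)) (B : ℝ)
    (hKB : ∀ v ∈ K, ‖v‖ ≤ B) (N₀ : ℕ)
    (t : Finset X) (ψ : X → X → ℝ) (hψ0 : ∀ j x, 0 ≤ ψ j x)
    (hψ1 : ∀ x, ∑ j ∈ t, ψ j x = 1)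
    (w : (Fin k → Fin N₀) → X → ℝ) (hw0 : ∀ a x, 0 ≤ w a x)
    (hw1 : ∀ x, ∑ a, w a x = 1)
    (hg : ∀ x, (g x : V) = ∑ a : Fin k → Fin N₀, w a x •
      ∑ j ∈ t, ψ j (T (-fun i => (a i : ℤ)) x) • (f (T (fun i => (a i : ℤ)) j) : V))
    (C : ℝ) (n : ℕ) (hn : 1 ≤ n) :
    (∀ x y b, GoodBase T w x b → GoodBase T w y b →
      (∀ j ∈ t, |ψ j (T b x) - ψ j (T b y)| ≤ C / n) →
      ∀ a : Fin k → Fin N₀, ‖(g (T (fun i => b i + (a i : ℤ)) x) : V)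
        - g (T (fun i => b i + (a i : ℤ)) y)‖ ≤ t.card * (C / n * B)) ∧
    ∃ c : X → Fin ((n + 1) ^ (N₀ ^ k * t.card)), ∀ x y, c x = c y →
      ‖(g x : V) - g y‖ ≤ (N₀ ^ k * t.card : ℕ) * (1 / n * B) := by
  classical
  constructor
  · intro x y b hx hy h a
    have key : ∀ z, GoodBase T w z b → (g (T (fun i => b i + (a i : ℤ)) z) : V)
        = ∑ j ∈ t, ψ j (T b z) • (f (T (fun i => (a i : ℤ)) j) : V) := by
      intro z hz
      have hz0 : ∀ a', a' ≠ a → w a' (T (fun i => b i + (a i : ℤ)) z) = 0 := by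
        intro a' ha'
        have h3 := hw1 (T (fun i => b i + (a i : ℤ)) z)
        have h4 := Finset.sum_le_sum_of_subset_of_nonneg (Finset.subset_univ {a', a})
          (fun i _ _ => hw0 i (T (fun i => b i + (a i : ℤ)) z))
        rw [Finset.sum_pair ha', hz a, h3] at h4
        linarith [hw0 a' (T (fun i => b i + (a i : ℤ)) z)]
      rw [hg, Finset.sum_eq_single a (fun a' _ ha' => by rw [hz0 a' ha', zero_smul])
        (fun h => absurd (Finset.mem_univ _) h), hz a, one_smul]
      refine Finset.sum_congr rfl fun j _ => ?_
      rw [← hT.map_add]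
      congr 3
      funext i
      simp
    rw [key x hx, key y hy]
    exact norm_sum_smul_sub_le _ _ _ _ _ _ (fun j _ => hKB _ (f _).2) h
  · let W : (Fin k → Fin N₀) × t → X → ℝ := fun p x => w p.1 x * ψ p.2 (T (-fun i => (p.1 i : ℤ)) x)
    have hW : ∀ x, (g x : V) = ∑ p, W p x • (f (T (fun i => (p.1 i : ℤ)) p.2) : V) := by
      intro x
      rw [hg, Fintype.sum_prod_type]
      refine Finset.sum_congr rfl fun a _ => ?_
      rw [Finset.smul_sum, ← Finset.sum_coe_sort t]
      refine Finset.sum_congr rfl fun j _ => ?_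
      rw [smul_smul]
    have hW0 : ∀ p x, 0 ≤ W p x := fun p x => mul_nonneg (hw0 _ _) (hψ0 _ _)
    have hW1 : ∀ p x, W p x ≤ 1 := fun p x => mul_le_one₀
      ((Finset.single_le_sum (fun a _ => hw0 a x) (Finset.mem_univ _)).trans_eq (hw1 x))
      (hψ0 _ _) ((Finset.single_le_sum (f := fun j => ψ j _) (fun j _ => hψ0 j _) p.2.2).trans_eq
        (hψ1 _))
    have hcI : Fintype.card ((Fin k → Fin N₀) × t) = N₀ ^ k * t.card := by simp
    have hc : Fintype.card ((Fin k → Fin N₀) × t → Fin (n + 1))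
        = (n + 1) ^ (N₀ ^ k * t.card) := by
      rw [Fintype.card_fun, hcI, Fintype.card_fin]
    refine ⟨fun x => Fintype.equivFinOfCardEq hc fun p => quant n (W p x), fun x y h => ?_⟩
    have h1 := (Fintype.equivFinOfCardEq hc).injective h
    rw [hW x, hW y, ← hcI]
    refine norm_sum_smul_sub_le _ _ _ _ _ _ (fun p _ => hKB _ (f _).2) fun p _ => ?_
    exact quant_eq hn (hW0 _ _) (hW1 _ _) (hW0 _ _) (hW1 _ _) (congrFun h1 p)
end

/-! ### Counting colours, and density -/

lemma box_growth (k : ℕ) (c γ : ℝ) (hγ : 0 < γ) :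
    ∀ᶠ N : ℕ in atTop, ((N : ℝ) + c) ^ k ≤ (1 + γ) * (N : ℝ) ^ k := by
  have h1 : Tendsto (fun N : ℕ => (1 + c / (N : ℝ)) ^ k) atTop (𝓝 ((1 + 0) ^ k)) :=
    ((tendsto_const_div_atTop_nhds_zero_nat c).const_add 1).pow k
  rw [add_zero, one_pow] at h1
  filter_upwards [h1.eventually_lt_const (show (1 : ℝ) < 1 + γ by linarith),
    eventually_ge_atTop 1] with N hN hN1
  have hN0 : (0 : ℝ) < N := by exact_mod_cast hN1
  have e : (N : ℝ) + c = N * (1 + c / N) := by field_simp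
  rw [e, mul_pow, mul_comm]
  exact mul_le_mul_of_nonneg_right hN.le (by positivity)

/-- The bookkeeping of the number of colours against the scale `Q / n`. -/
lemma log_colors_le (k D N₀ B F : ℕ) (hN₀ : 1 ≤ N₀) (hF : 1 ≤ F) (γ m Q : ℝ) (hγ : 0 < γ)
    (hQ : 0 < Q) (hm : (1 + γ) * ((D : ℝ) / (N₀ : ℝ) ^ k + γ * B) < m) :
    ∀ᶠ n : ℕ in atTop, ∀ N R α β : ℕ, ((R : ℝ) + N₀) ^ k ≤ (1 + γ) * (N : ℝ) ^ k →
      (α : ℝ) * (N₀ : ℝ) ^ k ≤ ((R : ℝ) + N₀) ^ k → (β : ℝ) ≤ γ * (R : ℝ) ^ k →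
      Real.log (((2 ^ R ^ k * (F * (n + 1) ^ D) ^ α) * (2 ^ R ^ k * ((n + 1) ^ B) ^ β) : ℕ))
        ≤ m * (N : ℝ) ^ k * (-Real.log (Q / n)) := by
  set μ := (D : ℝ) / (N₀ : ℝ) ^ k + γ * B with hμ
  set c := (1 + γ) * (2 * Real.log 2 + Real.log F / (N₀ : ℝ) ^ k + μ * Real.log 2) with hc
  have hN₀k : (0 : ℝ) < (N₀ : ℝ) ^ k := by positivity
  have hlog : Tendsto (fun n : ℕ => Real.log (n : ℝ)) atTop atTop :=
    Real.tendsto_log_atTop.comp tendsto_natCast_atTop_atTop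
  filter_upwards [hlog.eventually_ge_atTop ((c + m * Real.log Q) / (m - (1 + γ) * μ)),
    eventually_ge_atTop 1] with n hn hn1 N R α β hR hα hβ
  have hn0 : (0 : ℝ) < n := by exact_mod_cast hn1
  have hn1' : (1 : ℝ) ≤ n := by exact_mod_cast hn1
  have hF0 : (0 : ℝ) < F := by exact_mod_cast hF
  rw [div_le_iff₀ (by linarith)] at hn
  set Y := (1 + γ) * (N : ℝ) ^ k with hY
  set l := Real.log ((n : ℝ) + 1) with hl
  have hl0 : 0 ≤ l := Real.log_nonneg (by linarith)
  have hl1 : l ≤ Real.log n + Real.log 2 := by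
    rw [← Real.log_mul (by positivity) (by norm_num)]
    exact Real.log_le_log (by positivity) (by linarith)
  have hlF : 0 ≤ Real.log F := Real.log_nonneg (by exact_mod_cast hF)
  have hl2 : 0 ≤ Real.log 2 := Real.log_nonneg (by norm_num)
  have hRY : (R : ℝ) ^ k ≤ Y :=
    (pow_le_pow_left₀ (by positivity) (by linarith [Nat.cast_nonneg (α := ℝ) N₀]) k).trans hR
  have hαY : (α : ℝ) ≤ Y / (N₀ : ℝ) ^ k := by
    rw [le_div_iff₀ hN₀k]
    exact hα.trans hR
  have hβY : (β : ℝ) ≤ γ * Y := hβ.trans (mul_le_mul_of_nonneg_left hRY hγ.le)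
  have e : Real.log (((2 ^ R ^ k * (F * (n + 1) ^ D) ^ α) * (2 ^ R ^ k * ((n + 1) ^ B) ^ β) : ℕ))
      = (R : ℝ) ^ k * Real.log 2 + α * (Real.log F + D * l)
        + ((R : ℝ) ^ k * Real.log 2 + β * (B * l)) := by
    push_cast
    rw [Real.log_mul (by positivity) (by positivity), Real.log_mul (by positivity) (by positivity),
      Real.log_mul (by positivity) (by positivity), Real.log_pow, Real.log_pow, Real.log_pow,
      Real.log_mul (by positivity) (by positivity), Real.log_pow, Real.log_pow]
    push_cast
    rfl
  rw [e, Real.log_div hQ.ne' hn0.ne']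
  have hYn : 0 ≤ Y := by positivity
  have hμ0 : 0 ≤ μ := by positivity
  calc (R : ℝ) ^ k * Real.log 2 + α * (Real.log F + D * l)
        + ((R : ℝ) ^ k * Real.log 2 + β * (B * l))
      ≤ Y * Real.log 2 + Y / (N₀ : ℝ) ^ k * (Real.log F + D * l)
        + (Y * Real.log 2 + γ * Y * (B * l)) := by gcongr
    _ = Y * (2 * Real.log 2 + Real.log F / (N₀ : ℝ) ^ k + μ * l) := by rw [hμ]; ring
    _ ≤ Y * (2 * Real.log 2 + Real.log F / (N₀ : ℝ) ^ k + μ * (Real.log n + Real.log 2)) := by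
        gcongr
    _ = (N : ℝ) ^ k * (c + (1 + γ) * μ * Real.log n) := by rw [hY, hc]; ring
    _ ≤ (N : ℝ) ^ k * (m * (-(Real.log Q - Real.log n))) := by
        refine mul_le_mul_of_nonneg_left ?_ (by positivity)
        linarith
    _ = _ := by ring

section
variable {k : ℕ} {X V : Type*} [NormedAddCommGroup V]

/-- At scale `ε`, and along some box `[N]`, the map `I_g` takes at most `M` values up to an error
`ε`, where `log M ≤ m N^k |log (Q ε)|`. -/
def FewColors (T : (Fin k → ℤ) → X → X) (g : X → V) (Q m ε : ℝ) : Prop :=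
  ∃ (N M : ℕ) (c : X → Fin M), 1 ≤ N ∧
    Real.log M ≤ m * (N : ℝ) ^ k * (-Real.log (Q * ε)) ∧
    ∀ x y, c x = c y → ∀ a : Fin k → Fin N,
      shiftMetric (fun n => g (T (n + fun i => (a i : ℤ)) x))
        (fun n => g (T (n + fun i => (a i : ℤ)) y)) ≤ ε

/-- The functions with few colours at arbitrarily small scales are dense. -/
lemma exists_fewColors [NormedSpace ℝ V] (hk : 1 ≤ k) {K : Set V} (hKcompact : IsCompact K)
    (hK : Convex ℝ K)
    [MetricSpace X] [CompactSpace X] [Nonempty X] (T : (Fin k → ℤ) → X → X) (hT : IsZkAction T)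
    (hmarker : MarkerProperty T) (m Q : ℝ) (hQ : 0 < Q) (hm : mdim X T < ENNReal.ofReal m)
    (f : C(X, K)) (η δ : ℝ) (hη : 0 < η) (hδ : 0 < δ) :
    ∃ g : C(X, K), dist g f ≤ η ∧ ∃ ε, 0 < ε ∧ ε < δ ∧
      FewColors T (fun x => (g x : V)) Q m ε := by
  obtain ⟨B, hB⟩ := hKcompact.isBounded.exists_norm_le
  have hB0 : 0 ≤ B := (norm_nonneg _).trans (hB _ (f (Classical.arbitrary X)).2)
  obtain ⟨δ₁, hδ₁, hf⟩ := Metric.uniformContinuous_iff.1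
    (CompactSpace.uniformContinuous_of_continuous f.continuous) η hη
  obtain ⟨N₀, hN₀, hD⟩ : ∃ N₀ : ℕ, 1 ≤ N₀ ∧
      (widim X (blockRho T dist N₀) δ₁ : ℝ) / (N₀ : ℝ) ^ k < m := by
    have h1 : (⨅ (N : ℕ) (_ : 1 ≤ N),
        (widim X (blockRho T dist N) δ₁ : ℝ≥0∞) / (N : ℝ≥0∞) ^ k) < ENNReal.ofReal m :=
      (le_iSup₂ (f := fun (ε : ℝ) (_ : 0 < ε) => ⨅ (N : ℕ) (_ : 1 ≤ N),
        (widim X (blockRho T dist N) ε : ℝ≥0∞) / (N : ℝ≥0∞) ^ k) δ₁ hδ₁).trans_lt hm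
    simp only [iInf_lt_iff] at h1
    obtain ⟨N₀, hN₀, h2⟩ := h1
    refine ⟨N₀, hN₀, ?_⟩
    have hpos : (0 : ℝ) < (N₀ : ℝ) ^ k := by positivity
    have e : (widim X (blockRho T dist N₀) δ₁ : ℝ≥0∞) / (N₀ : ℝ≥0∞) ^ k
        = ENNReal.ofReal ((widim X (blockRho T dist N₀) δ₁ : ℝ) / (N₀ : ℝ) ^ k) := by
      rw [ENNReal.ofReal_div_of_pos hpos, ENNReal.ofReal_natCast,
        ENNReal.ofReal_pow (Nat.cast_nonneg _), ENNReal.ofReal_natCast]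
    rw [e] at h2
    exact (ENNReal.ofReal_lt_ofReal_iff_of_nonneg (by positivity)).1 h2
  obtain ⟨t, ψ, hψc, hψ0, hψ1, hψ, F, C, hC, hcol⟩ := exists_partition T hT N₀ hN₀ δ₁ hδ₁
  set D := widim X (blockRho T dist N₀) δ₁ with hDdef
  set B' := N₀ ^ k * t.card with hB'
  obtain ⟨γ, hγ, hγm⟩ : ∃ γ : ℝ, 0 < γ ∧ (1 + γ) * ((D : ℝ) / (N₀ : ℝ) ^ k + γ * B') < m := by
    have h1 : Tendsto (fun γ : ℝ => (1 + γ) * ((D : ℝ) / (N₀ : ℝ) ^ k + γ * B')) (𝓝[>] 0)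
        (𝓝 ((1 + 0) * ((D : ℝ) / (N₀ : ℝ) ^ k + 0 * B'))) := by
      refine Tendsto.mono_left (Continuous.tendsto (by fun_prop) 0) nhdsWithin_le_nhds
    obtain ⟨γ, h2, h3⟩ := ((h1.eventually_lt_const (by simpa using hD)).and
      self_mem_nhdsWithin).exists
    exact ⟨γ, h3, h2⟩
  obtain ⟨w, hwc, hw0, hw1, N₁, hN₁⟩ := rokhlin T hT hmarker N₀ hN₀ γ hγ
  obtain ⟨g, hgf, hg⟩ := exists_perturb hK T hT f η δ₁ hη.le (fun x y h => (hf h).le) N₀ t ψ hψc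
    hψ0 hψ1 hψ w hwc hw0 hw1
  refine ⟨g, hgf, ?_⟩
  have hF : 1 ≤ F := by
    obtain ⟨c, -⟩ := hcol 1 le_rfl
    by_contra h
    have h0 : F = 0 := by omega
    have := (c (Classical.arbitrary X)).2
    simp [h0] at this
  set S := ∑' n : Fin k → ℤ, (2 : ℝ) ^ (-(znorm n)) with hS
  have hS0 : 0 ≤ S := tsum_nonneg fun n => by positivity
  -- the error made by the colouring is `Cg / n` at every site
  set Cg : ℝ := t.card * (C * B) + B' * B with hCg
  have hCg0 : 0 ≤ Cg := by positivity
  set E : ℝ := S * Cg + 1 with hE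
  have hE0 : 0 < E := by positivity
  obtain ⟨n, hn1, hnδ, hlog⟩ := ((eventually_ge_atTop 1).and
    (((tendsto_const_div_atTop_nhds_zero_nat E).eventually_lt_const hδ).and
      (log_colors_le k D N₀ B' F hN₀ hF γ m (Q * E) hγ (by positivity) hγm))).exists
  have hn0 : (0 : ℝ) < n := by exact_mod_cast hn1
  refine ⟨E / n, by positivity, hnδ, ?_⟩
  obtain ⟨L, hL⟩ := exists_window (V := V) hk (B + B) (by positivity) (1 / n) (by positivity)
  obtain ⟨N, hN, hNN₁, hgrow⟩ := ((eventually_ge_atTop 1).and ((eventually_ge_atTop N₁).and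
    (box_growth k (2 * L + 2 * N₀) γ hγ))).exists
  set R := N + 2 * L + N₀ with hR
  obtain ⟨c₁, hc₁⟩ := hcol n hn1
  obtain ⟨hp₁, c₂, hc₂⟩ := perturb_color T hT f g B hB N₀ t ψ hψ0 hψ1 w hw0 hw1 hg C n hn1
  obtain ⟨c, hc⟩ := orbit_color T w hN₀ hw0 hw1 (fun x => (g x : V)) (Cg / n)
    (F * (n + 1) ^ D) ((n + 1) ^ B') (by positivity) (by positivity) c₁ c₂
    (fun x y b hx hy hxy a => (hp₁ x y b hx hy (hc₁ _ _ hxy) a).trans (by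
      have e : Cg / n = t.card * (C / n * B) + B' * B / n := by rw [hCg]; ring
      rw [e]
      have : (0 : ℝ) ≤ B' * B / n := by positivity
      linarith))
    (fun x y hxy => (hc₂ x y hxy).trans (by
      have e : Cg / n = t.card * (C / n * B) + B' * (1 / n * B) := by rw [hCg]; ring
      rw [e]
      have : (0 : ℝ) ≤ t.card * (C / n * B) := by positivity
      linarith)) R ⌊γ * (R : ℝ) ^ k⌋₊
    (fun x P _ hP => Nat.le_floor (hN₁ R (by omega) x P _ hP))
  refine ⟨N, _, fun x => c (T (fun _ => -((L : ℤ) + N₀)) x), hN, ?_, fun x y hxy a => ?_⟩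
  · have e : Q * (E / n) = Q * E / n := by ring
    rw [e]
    refine hlog N R _ _ ?_ ?_ (Nat.floor_le (by positivity))
    · refine le_trans (le_of_eq ?_) hgrow
      rw [hR]
      push_cast
      ring
    · exact_mod_cast Nat.div_mul_le_self ((R + N₀) ^ k) (N₀ ^ k)
  · have h1 := hL (fun n => (g (T (n + fun i => (a i : ℤ)) x) : V))
      (fun n => (g (T (n + fun i => (a i : ℤ)) y) : V)) (Cg / n) (by positivity)
      (fun n => (norm_sub_le _ _).trans (add_le_add (hB _ (g _).2) (hB _ (g _).2)))
      (fun v hv => by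
        have h2 := hc _ _ hxy (fun i => v i + (a i : ℤ) + ((L : ℤ) + N₀)) (fun i => by
          have h3 := abs_le.1 (hv i)
          have h4 := (a i).2
          omega)
        rw [← hT.map_add, ← hT.map_add] at h2
        have e : (fun i => v i + (a i : ℤ) + ((L : ℤ) + N₀)) + (fun _ => -((L : ℤ) + N₀))
            = v + fun i => (a i : ℤ) := by
          funext i
          simp only [Pi.add_apply]
          ring
        rwa [e] at h2)
    refine h1.trans (le_of_eq ?_)
    rw [hE]
    ring
end

/-! ### From colourings to open covers -/

section
variable {k : ℕ} {X V : Type*} [NormedAddCommGroup V]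

/-- If `g` has few colours at scale `ε` and `f` is `ε`-close to `g`, then `I_f(X)` has a small open
cover at the comparable scale `Q ε`. -/
lemma entScaleOn_le (hk : 1 ≤ k) {K : Set V} (hKcompact : IsCompact K)
    [MetricSpace X] [CompactSpace X] [Nonempty X] (T : (Fin k → ℤ) → X → X) (hT : IsZkAction T)
    (m Q ε : ℝ) (hQ : Q = 5 + 4 * ∑' n : Fin k → ℤ, (2 : ℝ) ^ (-(znorm n)))
    (hε : 0 < ε) (hQε : Q * ε < 1) (f g : C(X, K)) (hfg : dist f g < ε)
    (hg : FewColors T (fun x => (g x : V)) Q m ε) :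
    entScaleOn (fun (g : Fin k → ℤ) (ω : (Fin k → ℤ) → V) (n : Fin k → ℤ) => ω (n + g))
          (Set.range fun x : X => fun n : Fin k → ℤ => ((f (T n x) : V)))
          shiftMetric (Q * ε) / ENNReal.ofReal |Real.log (Q * ε)| ≤ ENNReal.ofReal m := by
  obtain ⟨N, M, c, hN, hlog, hc⟩ := hg
  set S := ∑' n : Fin k → ℤ, (2 : ℝ) ^ (-(znorm n)) with hS
  have hsum := summable_weight k hk
  have hS0 : 0 ≤ S := tsum_nonneg fun n => by positivity
  obtain ⟨B, hB⟩ := hKcompact.isBounded.exists_norm_le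
  have hB0 : 0 ≤ B := (norm_nonneg _).trans (hB _ (f (Classical.arbitrary X)).2)
  have hKB : ∀ u v : K, ‖(u : V) - v‖ ≤ B + B := fun u v =>
    (norm_sub_le _ _).trans (add_le_add (hB _ u.2) (hB _ v.2))
  set J : C(X, K) → (Fin k → ℤ) → X → (Fin k → ℤ) → V := fun h a x n => (h (T (n + a) x) : V)
    with hJ
  have htri : ∀ (h₁ h₂ h₃ : C(X, K)) a b d x y z, shiftMetric (J h₁ a x) (J h₃ d z)
      ≤ shiftMetric (J h₁ a x) (J h₂ b y) + shiftMetric (J h₂ b y) (J h₃ d z) :=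
    fun h₁ h₂ h₃ a b d x y z => shiftMetric_triangle hk (fun n => hKB _ _) (fun n => hKB _ _)
      (fun n => hKB _ _)
  have hclose : ∀ a x, shiftMetric (J f a x) (J g a x) ≤ S * ε := by
    intro a x
    unfold shiftMetric
    rw [hS, ← tsum_mul_right]
    refine (summable_shift hk (x := J f a x) (y := J g a x) (fun n => hKB _ _)).tsum_le_tsum
      (fun n => ?_) (hsum.mul_right ε)
    refine mul_le_mul_of_nonneg_left ?_ (by positivity)
    have h1 := (ContinuousMap.dist_apply_le_dist (f := f) (g := g) (T (n + a) x)).trans hfg.le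
    rwa [Subtype.dist_eq, dist_eq_norm] at h1
  set θ : ℝ := (2 + 2 * S) * ε with hθ
  have hcf : ∀ x y, c x = c y → ∀ a : Fin k → Fin N,
      shiftMetric (J f (fun i => (a i : ℤ)) x) (J f (fun i => (a i : ℤ)) y) < θ := by
    intro x y hxy a
    have h1 := htri f g f (fun i => (a i : ℤ)) (fun i => (a i : ℤ)) (fun i => (a i : ℤ)) x x y
    have h2 := htri g g f (fun i => (a i : ℤ)) (fun i => (a i : ℤ)) (fun i => (a i : ℤ)) x y y
    have h3 := hclose (fun i => (a i : ℤ)) x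
    have h4 := hclose (fun i => (a i : ℤ)) y
    rw [shiftMetric_comm] at h4
    have h5 : shiftMetric (J g (fun i => (a i : ℤ)) x) (J g (fun i => (a i : ℤ)) y) ≤ ε :=
      hc x y hxy a
    rw [hθ]
    linarith
  have hcov : coverNumOn (Set.range fun x : X => fun n : Fin k → ℤ => ((f (T n x) : V)))
      (blockRho (fun (g : Fin k → ℤ) (ω : (Fin k → ℤ) → V) (n : Fin k → ℤ) => ω (n + g))
        shiftMetric N) (Q * ε) ≤ M := by
    set r := Function.invFun c with hr
    have hr : ∀ x, c (r (c x)) = c x := fun x => Function.invFun_eq ⟨x, rfl⟩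
    set I : X → (Fin k → ℤ) → V := fun x n => (f (T n x) : V) with hI
    have hIc : Continuous I := continuous_pi fun n =>
      continuous_subtype_val.comp (f.continuous.comp (hT.cont n))
    set Z : Fin M → Set X := fun i => ⋃ a : Fin k → Fin N,
      {x | θ ≤ shiftMetric (J f (fun i => (a i : ℤ)) x) (J f (fun i => (a i : ℤ)) (r i))} with hZ
    have hZc : ∀ i, IsClosed (Z i) := by
      intro i
      refine isClosed_iUnion_of_finite fun a => isClosed_le continuous_const ?_
      unfold shiftMetric
      refine continuous_tsum (fun n => ?_) (hsum.mul_right (B + B)) fun n x => ?_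
      · refine continuous_const.mul (Continuous.norm (Continuous.sub ?_ continuous_const))
        exact continuous_subtype_val.comp (f.continuous.comp (hT.cont _))
      · rw [Real.norm_of_nonneg (by positivity)]
        exact mul_le_mul_of_nonneg_left (hKB _ _) (by positivity)
    refine Nat.sInf_le ⟨fun i => (I '' Z i)ᶜ, fun i =>
      ((hZc i).isCompact.image hIc).isClosed.isOpen_compl, ?_, ?_⟩
    · rintro _ ⟨x, rfl⟩
      rw [mem_iUnion]
      refine ⟨c x, ?_⟩
      rintro ⟨y, hy, hyx⟩
      obtain ⟨a, ha⟩ := mem_iUnion.1 hy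
      have h1 := hcf x (r (c x)) (hr x).symm a
      have h2 : J f (fun i => (a i : ℤ)) y = J f (fun i => (a i : ℤ)) x := by
        funext n
        exact congrFun hyx _
      rw [mem_ofPred_eq, h2] at ha
      linarith
    · rintro i _ ⟨hx, x, rfl⟩ _ ⟨hy, y, rfl⟩
      have key : ∀ z, I z ∈ (I '' Z i)ᶜ → ∀ a : Fin k → Fin N,
          shiftMetric (J f (fun i => (a i : ℤ)) z) (J f (fun i => (a i : ℤ)) (r i)) < θ := by
        intro z hz a
        by_contra h
        exact hz ⟨z, mem_iUnion.2 ⟨a, not_lt.1 h⟩, rfl⟩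
      have : Nonempty (Fin k → Fin N) := ⟨fun _ => ⟨0, hN⟩⟩
      have h1 : blockRho (fun (g : Fin k → ℤ) (ω : (Fin k → ℤ) → V) (n : Fin k → ℤ) => ω (n + g))
          shiftMetric N (I x) (I y) ≤ 2 * θ := by
        refine ciSup_le fun a => ?_
        have h2 := key x hx a
        have h3 := key y hy a
        rw [shiftMetric_comm] at h3
        have h4 := htri f f f (fun i => (a i : ℤ)) (fun i => (a i : ℤ)) (fun i => (a i : ℤ)) x (r i) y
        exact h4.trans (by linarith)
      refine h1.trans_lt ?_
      rw [hθ, hQ]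
      nlinarith
  have hQ0 : 0 < Q := by rw [hQ]; positivity
  have hlg : 0 < -Real.log (Q * ε) := by
    have := Real.log_neg (mul_pos hQ0 hε) hQε
    linarith
  have hNk : (0 : ℝ) < (N : ℝ) ^ k := by positivity
  refine (ENNReal.div_le_div_right (iInf₂_le N hN) _).trans ?_
  rw [abs_of_neg (by linarith)]
  have e : (N : ℝ≥0∞) ^ k = ENNReal.ofReal ((N : ℝ) ^ k) := by
    rw [ENNReal.ofReal_pow (Nat.cast_nonneg _), ENNReal.ofReal_natCast]
  rw [e, ← ENNReal.ofReal_div_of_pos hNk, ← ENNReal.ofReal_div_of_pos hlg]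
  refine ENNReal.ofReal_le_ofReal ?_
  rw [div_le_iff₀ hlg, div_le_iff₀ hNk]
  refine le_trans ?_ (hlog.trans (le_of_eq (by ring)))
  have hmono : ∀ p : ℕ, p ≤ M → Real.log p ≤ Real.log M := by
    intro p hp
    rcases Nat.eq_zero_or_pos p with h | h
    · rw [h, Nat.cast_zero, Real.log_zero]
      exact Real.log_natCast_nonneg M
    · exact Real.log_le_log (by exact_mod_cast h) (by exact_mod_cast hp)
  exact hmono _ hcov

lemma mmdimOn_empty {Ω : Type*} [TopologicalSpace Ω] (σ : (Fin k → ℤ) → Ω → Ω)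
    (ρ : Ω → Ω → ℝ) : mmdimOn σ ∅ ρ = 0 := by
  have h1 : ∀ ε N, coverNumOn (∅ : Set Ω) (blockRho σ ρ N) ε = 0 := fun ε N =>
    Nat.le_zero.1 (Nat.sInf_le ⟨fun i => i.elim0, fun i => i.elim0, empty_subset _,
      fun i => i.elim0⟩)
  have h2 : ∀ ε, entScaleOn σ ∅ ρ ε = 0 := fun ε => by
    refine le_antisymm ((iInf₂_le 1 le_rfl).trans ?_) zero_le
    simp [h1]
  simp [mmdimOn, h2]
end

/-- **Theorem.** Let `K` be a compact convex subset of a Banach space `V`, and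
let `(X,T)` be a `ℤ^k`-system with the marker property. For a dense `G_δ` set
of `f ∈ C(X,K)`, the subshift `I_f(X) ⊆ K^{ℤ^k}` satisfies
`mmdim(I_f(X), D) ≤ mdim(X)`. -/
theorem stmt_15 (k : ℕ) (hk : 1 ≤ k)
    (V : Type*) [NormedAddCommGroup V] [NormedSpace ℝ V] [CompleteSpace V]
    (K : Set V) (hKcompact : IsCompact K) (hKconvex : Convex ℝ K)
    (X : Type*) [MetricSpace X] [CompactSpace X]
    (T : (Fin k → ℤ) → X → X) (hT : IsZkAction T) (hmarker : MarkerProperty T) :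
    ∃ G : Set C(X, ↥K), Dense G ∧ IsGδ G ∧
      ∀ f ∈ G,
        mmdimOn (fun (g : Fin k → ℤ) (ω : (Fin k → ℤ) → V) (n : Fin k → ℤ) => ω (n + g))
          (Set.range fun x : X => fun n : Fin k → ℤ => ((f (T n x) : V)))
          shiftMetric ≤ mdim X T := by
  rcases isEmpty_or_nonempty X with hX | hX
  · refine ⟨univ, dense_univ, IsGδ.univ, fun f _ => ?_⟩
    rw [range_eq_empty, mmdimOn_empty]
    exact zero_le
  by_cases htop : mdim X T = ⊤
  · exact ⟨univ, dense_univ, IsGδ.univ, fun f _ => htop ▸ le_top⟩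
  set Q : ℝ := 5 + 4 * ∑' n : Fin k → ℤ, (2 : ℝ) ^ (-(znorm n)) with hQ
  have hS0 : 0 ≤ ∑' n : Fin k → ℤ, (2 : ℝ) ^ (-(znorm n)) := tsum_nonneg fun n => by positivity
  have hQ0 : 0 < Q := by positivity
  have : CompleteSpace K := hKcompact.isComplete.completeSpace_coe
  set δ : ℕ → ℝ := fun j => 1 / ((j : ℝ) + 1) with hδ
  have hδ0 : ∀ j, 0 < δ j := fun j => by positivity
  set U : ℕ → Set C(X, K) := fun j => ⋃ (g : C(X, K)) (ε : ℝ) (_ : 0 < ε ∧ ε < δ j ∧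
    FewColors T (fun x => (g x : V)) Q ((mdim X T).toReal + δ j) ε), Metric.ball g ε with hU
  have hUo : ∀ j, IsOpen (U j) := fun j => isOpen_iUnion fun g => isOpen_iUnion fun ε =>
    isOpen_iUnion fun _ => Metric.isOpen_ball
  have hUd : ∀ j, Dense (U j) := by
    intro j
    rw [Metric.dense_iff]
    intro f r hr
    have hm : mdim X T < ENNReal.ofReal ((mdim X T).toReal + δ j) := by
      rw [ENNReal.lt_ofReal_iff_toReal_lt htop]
      linarith [hδ0 j]
    obtain ⟨g, hgf, ε, hε, hεδ, hg⟩ := exists_fewColors hk hKcompact hKconvex T hT hmarker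
      _ Q hQ0 hm f (r / 2) (δ j) (by positivity) (hδ0 j)
    refine ⟨g, ?_, ?_⟩
    · rw [Metric.mem_ball]
      linarith
    · simp only [hU, mem_iUnion]
      exact ⟨g, ε, ⟨hε, hεδ, hg⟩, Metric.mem_ball_self hε⟩
  refine ⟨⋂ j, U j, dense_iInter_of_isOpen_nat hUo hUd, IsGδ.iInter_of_isOpen hUo, fun f hf => ?_⟩
  refine ENNReal.le_of_forall_pos_le_add fun e he _ => ?_
  refine liminf_le_of_frequently_le' ?_
  rw [frequently_iff]
  intro A hA
  obtain ⟨r, hr, hrA⟩ := mem_nhdsGT_iff_exists_Ioo_subset.1 hA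
  have hr0 : (0 : ℝ) < r := hr
  have hlim : Tendsto δ atTop (𝓝 0) := tendsto_one_div_add_atTop_nhds_zero_nat
  obtain ⟨j, hj1, hj2⟩ := ((hlim.eventually_lt_const (show (0 : ℝ) < e from he)).and
    (hlim.eventually_lt_const (show (0 : ℝ) < min r 1 / Q by positivity))).exists
  have hfj := mem_iInter.1 hf j
  simp only [hU, mem_iUnion] at hfj
  obtain ⟨g, ε, ⟨hε, hεδ, hg⟩, hfg⟩ := hfj
  have h1 : Q * ε < min r 1 := by
    have := hεδ.trans hj2
    rw [lt_div_iff₀ hQ0] at this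
    linarith
  refine ⟨Q * ε, hrA ⟨by positivity, h1.trans_le (min_le_left _ _)⟩, ?_⟩
  refine (entScaleOn_le hk hKcompact T hT _ Q ε hQ hε (h1.trans_le (min_le_right _ _)) f g hfg
    hg).trans ?_
  rw [ENNReal.ofReal_add ENNReal.toReal_nonneg (hδ0 j).le, ENNReal.ofReal_toReal htop]
  refine add_le_add le_rfl ?_
  rw [← ENNReal.ofReal_coe_nnreal]
  exact ENNReal.ofReal_le_ofReal hj1.le
end

section
/- Let W be a real normed space, n ≥ 1, and a, u_1, …, u_n ∈ W with ‖u_i‖ ≤ 1 for all i. Let S = {a + x_1 u_1 + ⋯ + x_n u_n : x_1,…,x_n ≥ 0, x_1 + ⋯ + x_n ≤ 1}. Then for every 0 < ε ≤ 1 there exist at most (2n+1)^n · ε^{−n} points of W whose closed balls of radius ε/2 cover S. In particular S can be covered by at most (2n+1)^n · ε^{−n} sets of diameter at most ε. -/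
/-! The simplex is covered by balls centred at the grid points `a + ∑ kᵢ h uᵢ`, where the mesh is
`h = ε / (2n)` and `kᵢ ∈ {0, …, ⌊1/h⌋}`. Rounding every coordinate of `x` down to a multiple of `h`
moves the point by at most `n h = ε / 2`, and the number of grid points is at most
`(1/h + 1)ⁿ ≤ ((2n+1)/ε)ⁿ`, the last step because `1 ≤ 1/ε`. -/

open Set Metric

/-- **Lemma (covering number of a simplex image).** Let `W` be a real normed
space and `S = {a + Σ xᵢ uᵢ : xᵢ ≥ 0, Σ xᵢ ≤ 1}` with `‖uᵢ‖ ≤ 1`. For every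
`0 < ε ≤ 1`, `S` is covered by at most `(2n+1)ⁿ ε⁻ⁿ` closed balls of radius
`ε/2` (hence by that many sets of diameter at most `ε`). -/
theorem stmt_16 (W : Type*) [NormedAddCommGroup W] [NormedSpace ℝ W]
    (n : ℕ) (hn : 1 ≤ n) (a : W) (u : Fin n → W) (hu : ∀ i, ‖u i‖ ≤ 1)
    (ε : ℝ) (hε0 : 0 < ε) (hε1 : ε ≤ 1) :
    ∃ P : Finset W, (P.card : ℝ) ≤ ((2 * n + 1 : ℕ) : ℝ) ^ n / ε ^ n ∧
      {w : W | ∃ x : Fin n → ℝ, (∀ i, 0 ≤ x i) ∧ (∑ i, x i) ≤ 1 ∧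
          w = a + ∑ i, x i • u i} ⊆
        ⋃ p ∈ P, Metric.closedBall p (ε / 2) := by
  classical
  have hn0 : (0 : ℝ) < n := by exact_mod_cast hn
  obtain ⟨h, hh⟩ : ∃ h : ℝ, h = ε / (2 * n) := ⟨_, rfl⟩
  have hpos : 0 < h := by rw [hh]; positivity
  refine ⟨(Finset.univ : Finset (Fin n → Fin (⌊1 / h⌋₊ + 1))).image
    (fun k => a + ∑ i, (((k i : ℕ) : ℝ) * h) • u i), ?_, ?_⟩
  · have hcard : (((Finset.univ : Finset (Fin n → Fin (⌊1 / h⌋₊ + 1))).image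
        (fun k => a + ∑ i, (((k i : ℕ) : ℝ) * h) • u i)).card : ℝ)
        ≤ ((⌊1 / h⌋₊ : ℝ) + 1) ^ n := by
      refine (Nat.cast_le.mpr Finset.card_image_le).trans ?_
      simp
    refine hcard.trans ?_
    rw [← div_pow]
    refine pow_le_pow_left₀ (by positivity) ?_ n
    have h1 : (⌊1 / h⌋₊ : ℝ) ≤ 1 / h := Nat.floor_le (by positivity)
    have h2 : 1 / h = 2 * n / ε := by rw [hh]; field_simp
    have h3 : 1 ≤ 1 / ε := by rw [le_div_iff₀ hε0]; linarith
    push_cast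
    rw [add_div]
    linarith
  · rintro w ⟨x, hx0, hx1, rfl⟩
    have hxi : ∀ i, x i ≤ 1 := fun i =>
      (Finset.single_le_sum (fun j _ => hx0 j) (Finset.mem_univ i)).trans hx1
    let k : Fin n → Fin (⌊1 / h⌋₊ + 1) := fun i =>
      ⟨⌊x i / h⌋₊, Nat.lt_succ_of_le
        (Nat.floor_le_floor (div_le_div_of_nonneg_right (hxi i) hpos.le))⟩
    simp only [Set.mem_iUnion, exists_prop]
    refine ⟨a + ∑ i, (((k i : ℕ) : ℝ) * h) • u i,
      Finset.mem_image_of_mem _ (Finset.mem_univ k), ?_⟩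
    rw [Metric.mem_closedBall, dist_add_left, dist_eq_norm, ← Finset.sum_sub_distrib]
    have hterm : ∀ i ∈ Finset.univ, ‖x i • u i - (((k i : ℕ) : ℝ) * h) • u i‖ ≤ h := by
      intro i _
      have h1 : ((k i : ℕ) : ℝ) * h ≤ x i :=
        (le_div_iff₀ hpos).mp (Nat.floor_le (div_nonneg (hx0 i) hpos.le))
      have h2 : x i < (((k i : ℕ) : ℝ) + 1) * h :=
        (div_lt_iff₀ hpos).mp (Nat.lt_floor_add_one (x i / h))
      rw [← sub_smul, norm_smul, Real.norm_of_nonneg (by linarith)]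
      calc _ ≤ (x i - ((k i : ℕ) : ℝ) * h) * 1 :=
            mul_le_mul_of_nonneg_left (hu i) (by linarith)
        _ ≤ h := by linarith
    refine (norm_sum_le_of_le _ hterm).trans (le_of_eq ?_)
    rw [Finset.sum_const, Finset.card_univ, Fintype.card_fin, nsmul_eq_mul, hh]
    field_simp
end
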